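/- arXiv:1502.03010 — 10 statements merged into one kernel-verified Lean document; each statement's English description precedes it below -/
import Mathlib

section
/- (Theorem 1) A family {E_{b|y}} of POVMs on ℂ^d (settings y in a finite set Y, outcomes b in a finite set B) is jointly measurable if and only if there exist a dimension m, an entanglement-breaking channel from ℂ^d to ℂ^m given by a finite set Λ, a POVM {E_λ} on ℂ^d and density matrices {ρ_λ} on ℂ^m, together with POVMs {Ẽ_{b|y}} on ℂ^m, such that for all b, y: E_{b|y} = ∑_λ tr(Ẽ_{b|y} * ρ_λ) • E_λ (i.e. E_{b|y} is the measurement induced on the channel input by measuring Ẽ_{b|y} on the channel output). -/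
open scoped BigOperators Matrix ComplexOrder Kronecker ComplexConjugate

/-- A POVM on `ℂ^d` with outcome set `B`: positive semidefinite effects summing to `1`. -/
def IsPOVM {d : ℕ} {B : Type} [Fintype B] (E : B → Matrix (Fin d) (Fin d) ℂ) : Prop :=
  (∀ b, (E b).PosSemidef) ∧ ∑ b, E b = 1

/-- A family of POVMs `E b y` (outcome `b`, setting `y`) on `ℂ^d` is jointly measurable
if it arises from a single POVM `G` by classical post-processing. -/
def JointlyMeasurable {d : ℕ} {B Y : Type} [Fintype B] [Fintype Y]
    (E : B → Y → Matrix (Fin d) (Fin d) ℂ) : Prop :=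
  ∃ (n : ℕ) (G : Fin n → Matrix (Fin d) (Fin d) ℂ) (p : B → Y → Fin n → ℝ),
    IsPOVM G ∧ (∀ b y l, 0 ≤ p b y l) ∧ (∀ y l, ∑ b, p b y l = 1) ∧
    (∀ b y, E b y = ∑ l, p b y l • G l)

/-- An assemblage `σ b y` on `ℂ^d` is unsteerable if it admits a local-hidden-state model. -/
def Unsteerable {d : ℕ} {B Y : Type} [Fintype B] [Fintype Y]
    (σ : B → Y → Matrix (Fin d) (Fin d) ℂ) : Prop :=
  ∃ (n : ℕ) (τ : Fin n → Matrix (Fin d) (Fin d) ℂ) (p : B → Y → Fin n → ℝ),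
    (∀ l, (τ l).PosSemidef) ∧ (∑ l, (τ l).trace = 1) ∧
    (∀ b y l, 0 ≤ p b y l) ∧ (∀ y l, ∑ b, p b y l = 1) ∧
    (∀ b y, σ b y = ∑ l, p b y l • τ l)

open scoped MatrixOrder in
theorem trace_mul_nonneg_of_posSemidef {m : ℕ} {A R : Matrix (Fin m) (Fin m) ℂ}
    (hA : A.PosSemidef) (hR : R.PosSemidef) : 0 ≤ (A * R).trace := by
  obtain ⟨C, rfl⟩ := CStarAlgebra.nonneg_iff_eq_star_mul_self.mp hR.nonneg
  have h := (hA.mul_mul_conjTranspose_same C).trace_nonneg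
  rw [Matrix.star_eq_conjTranspose, ← mul_assoc, Matrix.trace_mul_comm, ← mul_assoc]
  exact h

/-- Theorem 1: a family of POVMs on `ℂ^d` is jointly measurable iff it is
the family of measurements induced on the input of some entanglement-breaking channel
(given by a POVM `G` and density matrices `ρ`) by POVMs `Et` on the channel output. -/
theorem jointlyMeasurable_iff_induced_by_entanglement_breaking
    {d : ℕ} {B Y : Type} [Fintype B] [Fintype Y]
    (E : B → Y → Matrix (Fin d) (Fin d) ℂ)
    (hE : ∀ y, IsPOVM fun b => E b y) :
    JointlyMeasurable E ↔
      ∃ (m n : ℕ) (G : Fin n → Matrix (Fin d) (Fin d) ℂ)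
        (ρ : Fin n → Matrix (Fin m) (Fin m) ℂ)
        (Et : B → Y → Matrix (Fin m) (Fin m) ℂ),
        IsPOVM G ∧
        (∀ l, (ρ l).PosSemidef ∧ (ρ l).trace = 1) ∧
        (∀ y, IsPOVM fun b => Et b y) ∧
        (∀ b y, E b y = ∑ l, (Et b y * ρ l).trace • G l) := by
  constructor
  · rintro ⟨n, G, p, hG, hp0, hp1, hEG⟩
    refine ⟨n, n, G, fun l => Matrix.diagonal (Pi.single l 1),
      fun b y => Matrix.diagonal fun l => (p b y l : ℂ), hG, ?_, ?_, ?_⟩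
    · intro l
      refine ⟨Matrix.PosSemidef.diagonal ?_, ?_⟩
      · exact Pi.single_nonneg.mpr zero_le_one
      · simp [Matrix.trace_diagonal]
    · intro y
      refine ⟨fun b => Matrix.PosSemidef.diagonal fun l => ?_, ?_⟩
      · exact Complex.zero_le_real.mpr (hp0 b y l)
      · ext i j
        rw [Matrix.sum_apply]
        by_cases hij : i = j
        · subst hij
          simp only [Matrix.diagonal_apply_eq, Matrix.one_apply_eq]
          exact_mod_cast hp1 y i
        · simp [hij]
    · intro b y
      rw [hEG]
      refine Finset.sum_congr rfl fun l _ => ?_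
      have h : (Matrix.diagonal (fun l => (p b y l : ℂ)) *
          Matrix.diagonal (Pi.single l (1 : ℂ))).trace = (p b y l : ℂ) := by
        rw [Matrix.diagonal_mul_diagonal, Matrix.trace_diagonal]
        simp [Pi.single_apply]
      rw [h]
      ext i j
      simp
  · rintro ⟨m, n, G, ρ, Et, hG, hρ, hEt, hEG⟩
    have hnn : ∀ b y l, 0 ≤ (Et b y * ρ l).trace := fun b y l =>
      trace_mul_nonneg_of_posSemidef ((hEt y).1 b) (hρ l).1
    refine ⟨n, G, fun b y l => (Et b y * ρ l).trace.re, hG, ?_, ?_, ?_⟩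
    · exact fun b y l => (Complex.nonneg_iff.mp (hnn b y l)).1
    · intro y l
      rw [← Complex.re_sum, ← Matrix.trace_sum, ← Finset.sum_mul, (hEt y).2, one_mul, (hρ l).2,
        Complex.one_re]
    · intro b y
      rw [hEG]
      refine Finset.sum_congr rfl fun l _ => ?_
      have h : (Et b y * ρ l).trace = ((Et b y * ρ l).trace.re : ℂ) :=
        Complex.ext rfl (by simpa using (Complex.nonneg_iff.mp (hnn b y l)).2.symm)
      rw [h]
      ext i j
      simp
end

section
/- Let {F_{b|y}} be a family of Hermitian matrices on ℂ^d (settings y in a finite set Y, outcomes b in a finite set B) and L ∈ ℝ such that ∑_{b,y} Re tr(F_{b|y} * σ_{b|y}) ≤ L for every unsteerable assemblage {σ_{b|y}} on ℂ^d. Then ∑_{b,y} Re tr(F_{b|y} * E_{b|y}) ≤ d * L for every jointly measurable family of POVMs {E_{b|y}} on ℂ^d (with the same index sets). -/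
open scoped BigOperators Matrix ComplexOrder Kronecker ComplexConjugate

/-- a linear EPR-steering inequality with bound `L` yields a linear
joint-measurability inequality with bound `d * L`. -/
theorem steering_inequality_to_joint_measurability_inequality
    {d : ℕ} {B Y : Type} [Fintype B] [Fintype Y]
    (F : B → Y → Matrix (Fin d) (Fin d) ℂ)
    (hF : ∀ b y, (F b y).IsHermitian) (L : ℝ)
    (hL : ∀ σ : B → Y → Matrix (Fin d) (Fin d) ℂ, Unsteerable σ →
      ∑ b, ∑ y, ((F b y * σ b y).trace).re ≤ L)
    (E : B → Y → Matrix (Fin d) (Fin d) ℂ)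
    (hE : ∀ y, IsPOVM fun b => E b y)
    (hJM : JointlyMeasurable E) :
    ∑ b, ∑ y, ((F b y * E b y).trace).re ≤ d * L := by
  obtain ⟨n, G, p, ⟨hG, hG1⟩, hp, hp1, hEG⟩ := hJM
  rcases Nat.eq_zero_or_pos d with rfl | hd
  · simp [Matrix.trace]
  have hd' : (0 : ℝ) < d := by exact_mod_cast hd
  have hdC : (d : ℂ) ≠ 0 := by exact_mod_cast hd.ne'
  have h := hL (fun b y => (d : ℝ)⁻¹ • E b y) ⟨n, fun l => (d : ℝ)⁻¹ • G l, p, ?_, ?_, hp, hp1, ?_⟩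
  · have h2 : ∑ b, ∑ y, ((F b y * ((d : ℝ)⁻¹ • E b y)).trace).re
        = (d : ℝ)⁻¹ * ∑ b, ∑ y, ((F b y * E b y).trace).re := by
      simp only [Finset.mul_sum, Matrix.mul_smul, Matrix.trace_smul, Complex.smul_re, smul_eq_mul]
    rw [h2, inv_mul_le_iff₀ hd'] at h
    exact h
  · intro l
    exact (hG l).smul (inv_nonneg.mpr hd'.le)
  · rw [← Matrix.trace_sum, ← Finset.smul_sum, hG1, Matrix.trace_smul, Matrix.trace_one]
    simp [hdC]
  · intro b y
    simp only [hEG, Finset.smul_sum]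
    exact Finset.sum_congr rfl fun l _ => smul_comm _ _ _
end

section
/- If a family of POVMs {E_{b|y}} on ℂ^d (settings y in a finite set Y, outcomes b in a finite set B) is not jointly measurable, then it violates a linear joint-measurability inequality: there exist Hermitian matrices {F_{b|y}} on ℂ^d and L ∈ ℝ such that ∑_{b,y} Re tr(F_{b|y} * G_{b|y}) ≤ L for every jointly measurable family of POVMs {G_{b|y}} on ℂ^d with the same index sets, while ∑_{b,y} Re tr(F_{b|y} * E_{b|y}) > L. -/
open scoped BigOperators Matrix ComplexOrder Kronecker ComplexConjugate

/-- Post-processing by deterministic strategies. -/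
noncomputable def detMap {d : ℕ} {B Y : Type} [Fintype B] [Fintype Y] [DecidableEq B]
    [DecidableEq Y] (H : (Y → B) → Matrix (Fin d) (Fin d) ℂ) :
    B → Y → Matrix (Fin d) (Fin d) ℂ :=
  fun b y => ∑ f : Y → B, (if f y = b then (1 : ℝ) else 0) • H f

lemma jm_of_det {d : ℕ} {B Y : Type} [Fintype B] [Fintype Y] [DecidableEq B] [DecidableEq Y]
    (H : (Y → B) → Matrix (Fin d) (Fin d) ℂ) (hH : IsPOVM H) :
    JointlyMeasurable (detMap H) := by
  let e := (Fintype.equivFin (Y → B)).symm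
  refine ⟨Fintype.card (Y → B), fun l => H (e l),
    fun b y l => if e l y = b then 1 else 0, ⟨fun l => hH.1 _, ?_⟩, ?_, ?_, ?_⟩
  · rw [← hH.2]; exact e.sum_comp H
  · intro b y l; dsimp only; split_ifs <;> norm_num
  · intro y l; simp
  · intro b y
    exact (e.sum_comp (fun f : Y → B => (if f y = b then (1 : ℝ) else 0) • H f)).symm

lemma sum_prod_ind {B Y : Type} [Fintype B] [Fintype Y] [DecidableEq B] [DecidableEq Y]
    (p : B → Y → ℝ) (hp : ∀ y, ∑ b, p b y = 1) (b : B) (y : Y) :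
    ∑ f : Y → B, (if f y = b then (1 : ℝ) else 0) * ∏ z, p (f z) z = p b y := by
  have h := (Finset.prod_univ_sum (fun _ : Y => (Finset.univ : Finset B))
    (fun z c => if z = y then (if c = b then p c z else 0) else p c z))
  rw [Fintype.piFinset_univ] at h
  have h1 : (∏ z : Y, ∑ c : B,
      (if z = y then (if c = b then p c z else 0) else p c z)) = p b y := by
    rw [Finset.prod_eq_single y]
    · simp
    · intro z _ hz; simp [hz, hp]
    · simp
  rw [h1] at h
  rw [h]
  refine Finset.sum_congr rfl fun f _ => ?_
  by_cases hf : f y = b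
  · simp only [hf, if_true, one_mul]
    refine Finset.prod_congr rfl fun z _ => ?_
    by_cases hy : z = y
    · subst hy; simp [hf]
    · simp [hy]
  · simp only [hf, if_false, zero_mul]
    symm
    exact Finset.prod_eq_zero (Finset.mem_univ y) (by simp [hf])

lemma det_of_jm {d : ℕ} {B Y : Type} [Fintype B] [Fintype Y] [DecidableEq B] [DecidableEq Y]
    (E : B → Y → Matrix (Fin d) (Fin d) ℂ) (h : JointlyMeasurable E) :
    ∃ H : (Y → B) → Matrix (Fin d) (Fin d) ℂ, IsPOVM H ∧ detMap H = E := by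
  obtain ⟨n, G, p, hG, hp0, hp1, hE⟩ := h
  refine ⟨fun f => ∑ l, (∏ y, p (f y) y l) • G l, ⟨?_, ?_⟩, ?_⟩
  · intro f
    refine Matrix.posSemidef_sum _ fun l _ => ?_
    exact (hG.1 l).smul (Finset.prod_nonneg fun y _ => hp0 _ _ _)
  · rw [Finset.sum_comm, ← hG.2]
    refine Finset.sum_congr rfl fun l _ => ?_
    rw [← Finset.sum_smul]
    have h := (Finset.prod_univ_sum (fun _ : Y => (Finset.univ : Finset B))
      (fun z c => p c z l))
    rw [Fintype.piFinset_univ] at h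
    rw [← h]; simp [hp1]
  · funext b y
    rw [hE]
    simp only [detMap, Finset.smul_sum, smul_smul]
    rw [Finset.sum_comm]
    refine Finset.sum_congr rfl fun l _ => ?_
    rw [← Finset.sum_smul, sum_prod_ind (fun b y => p b y l) (fun y => hp1 y l)]

section
open scoped Matrix.Norms.L2Operator MatrixOrder

lemma povm_compact {d : ℕ} {B : Type} [Fintype B] :
    IsCompact {H : B → Matrix (Fin d) (Fin d) ℂ | IsPOVM H} := by
  have : ProperSpace (Matrix (Fin d) (Fin d) ℂ) := FiniteDimensional.proper ℂ _
  apply Metric.isCompact_of_isClosed_isBounded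
  · have : {H : B → Matrix (Fin d) (Fin d) ℂ | IsPOVM H} =
        (⋂ b, {H | 0 ≤ H b}) ∩ {H | ∑ b, H b = 1} := by
      ext H
      simp [IsPOVM, Matrix.nonneg_iff_posSemidef]
    rw [this]
    refine (isClosed_iInter fun b => ?_).inter ?_
    · exact isClosed_le continuous_const (continuous_apply b)
    · exact isClosed_eq (by fun_prop) continuous_const
  · refine (Metric.isBounded_closedBall (x := 0) (r := ‖(1 : Matrix (Fin d) (Fin d) ℂ)‖)).subset ?_
    intro H hH
    rw [mem_closedBall_zero_iff, pi_norm_le_iff_of_nonneg (norm_nonneg _)]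
    intro b
    refine CStarAlgebra.norm_le_norm_of_nonneg_of_le (hH.1 b).nonneg ?_
    rw [← hH.2]
    exact Finset.single_le_sum (f := H) (fun i _ => (hH.1 i).nonneg) (Finset.mem_univ b)

end

lemma povm_convex {d : ℕ} {B : Type} [Fintype B] :
    Convex ℝ {H : B → Matrix (Fin d) (Fin d) ℂ | IsPOVM H} := by
  intro H hH K hK a b ha hb hab
  refine ⟨fun i => ((hH.1 i).smul ha).add ((hK.1 i).smul hb), ?_⟩
  simp only [Pi.add_apply, Pi.smul_apply, Finset.sum_add_distrib, ← Finset.smul_sum]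
  rw [hH.2, hK.2, ← add_smul, hab, one_smul]

/-- A real functional on matrices is represented on Hermitian ones by a Hermitian matrix. -/
lemma riesz_herm {d : ℕ} (φ : Matrix (Fin d) (Fin d) ℂ →ₗ[ℝ] ℝ) :
    ∃ F : Matrix (Fin d) (Fin d) ℂ, F.IsHermitian ∧
      ∀ X : Matrix (Fin d) (Fin d) ℂ, X.IsHermitian → ((F * X).trace).re = φ X := by
  let A : Matrix (Fin d) (Fin d) ℂ := Matrix.of fun j i =>
    ⟨φ (Matrix.single i j 1), - φ (Matrix.single i j Complex.I)⟩
  have hA : ∀ X : Matrix (Fin d) (Fin d) ℂ, ((A * X).trace).re = φ X := by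
    intro X
    conv_rhs => rw [Matrix.matrix_eq_sum_single X]
    simp only [Matrix.trace, Matrix.diag, Matrix.mul_apply, Complex.re_sum, map_sum]
    rw [Finset.sum_comm]
    refine Finset.sum_congr rfl fun i _ => Finset.sum_congr rfl fun j _ => ?_
    have : Matrix.single i j (X i j) = (X i j).re • Matrix.single i j (1 : ℂ)
        + (X i j).im • Matrix.single i j Complex.I := by
      rw [Matrix.smul_single, Matrix.smul_single, ← Matrix.single_add]
      congr 1
      apply Complex.ext <;> simp
    rw [this, map_add, map_smul, map_smul]
    simp [A, Complex.mul_re]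
    ring
  refine ⟨(1 / 2 : ℝ) • (A + Aᴴ), ?_, ?_⟩
  · ext i j
    simp [Matrix.conjTranspose_apply, add_comm]
  · intro X hX
    have h2 : ((Aᴴ * X).trace).re = φ X := by
      rw [← hA X]
      have : Aᴴ * X = (X * A)ᴴ := by rw [Matrix.conjTranspose_mul, hX.eq]
      rw [this, Matrix.trace_conjTranspose, Matrix.trace_mul_comm]
      simp
    rw [Matrix.smul_mul, Matrix.trace_smul, Complex.smul_re, add_mul, Matrix.trace_add,
      Complex.add_re, hA, h2, smul_eq_mul]
    ring

/-- every family of POVMs that is not jointly measurable violates some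
linear joint-measurability inequality. -/
theorem incompatible_violates_linear_inequality
    {d : ℕ} {B Y : Type} [Fintype B] [Fintype Y]
    (E : B → Y → Matrix (Fin d) (Fin d) ℂ)
    (hE : ∀ y, IsPOVM fun b => E b y)
    (hJM : ¬ JointlyMeasurable E) :
    ∃ (F : B → Y → Matrix (Fin d) (Fin d) ℂ) (L : ℝ),
      (∀ b y, (F b y).IsHermitian) ∧
      (∀ G : B → Y → Matrix (Fin d) (Fin d) ℂ,
        (∀ y, IsPOVM fun b => G b y) → JointlyMeasurable G →
          ∑ b, ∑ y, ((F b y * G b y).trace).re ≤ L) ∧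
      L < ∑ b, ∑ y, ((F b y * E b y).trace).re := by
  classical
  have : LocallyConvexSpace ℝ (Matrix (Fin d) (Fin d) ℂ) :=
    inferInstanceAs (LocallyConvexSpace ℝ (Fin d → Fin d → ℂ))
  let S : Set (B → Y → Matrix (Fin d) (Fin d) ℂ) :=
    Set.image detMap {H : (Y → B) → Matrix (Fin d) (Fin d) ℂ | IsPOVM H}
  have hlin : IsLinearMap ℝ (detMap : ((Y → B) → Matrix (Fin d) (Fin d) ℂ) → _) := by
    constructor
    · intro H K
      funext b y
      simp only [detMap, Pi.add_apply, smul_add, Finset.sum_add_distrib]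
    · intro c H
      funext b y
      simp only [detMap, Pi.smul_apply, Finset.smul_sum]
      exact Finset.sum_congr rfl fun f _ => smul_comm _ _ _
  have hcont : Continuous (detMap : ((Y → B) → Matrix (Fin d) (Fin d) ℂ) → _) := by
    unfold detMap
    fun_prop
  have hS : IsClosed S := (povm_compact.image hcont).isClosed
  have hSc : Convex ℝ S := povm_convex.is_linear_image hlin
  have hES : E ∉ S := by
    rintro ⟨H, hH, rfl⟩
    exact hJM (jm_of_det H hH)
  obtain ⟨φ, u, h1, h2⟩ := geometric_hahn_banach_closed_point hSc hS hES
  let ψ : B → Y → (Matrix (Fin d) (Fin d) ℂ →ₗ[ℝ] ℝ) := fun b y =>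
    (φ : (B → Y → Matrix (Fin d) (Fin d) ℂ) →ₗ[ℝ] ℝ) ∘ₗ
      (LinearMap.single ℝ (fun _ : B => Y → Matrix (Fin d) (Fin d) ℂ) b) ∘ₗ
      (LinearMap.single ℝ (fun _ : Y => Matrix (Fin d) (Fin d) ℂ) y)
  have hψ : ∀ X : B → Y → Matrix (Fin d) (Fin d) ℂ, ∑ b, ∑ y, ψ b y (X b y) = φ X := by
    intro X
    have hX : X = ∑ b, ∑ y, Pi.single b (Pi.single y (X b y)) := by
      have h3 : ∀ b, ∑ y, (Pi.single b (Pi.single y (X b y)) :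
          B → Y → Matrix (Fin d) (Fin d) ℂ) = Pi.single b (X b) := by
        intro b
        rw [← Finset.univ_sum_single (X b)]
        simp only [Finset.univ_sum_single]
        conv_rhs => rw [← Finset.univ_sum_single (X b)]
        exact (map_sum (LinearMap.single ℝ (fun _ : B => Y → Matrix (Fin d) (Fin d) ℂ) b)
          _ _).symm
      simp only [h3, Finset.univ_sum_single]
    conv_rhs => rw [hX]
    simp only [map_sum]
    rfl
  choose F hF hFX using fun b y => riesz_herm (ψ b y)
  have key : ∀ G : B → Y → Matrix (Fin d) (Fin d) ℂ, (∀ y, IsPOVM fun b => G b y) →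
      ∑ b, ∑ y, ((F b y * G b y).trace).re = φ G := by
    intro G hG
    rw [← hψ G]
    exact Finset.sum_congr rfl fun b _ => Finset.sum_congr rfl fun y _ =>
      hFX b y _ ((hG y).1 b).isHermitian
  refine ⟨F, u, hF, ?_, ?_⟩
  · intro G hG hGJ
    rw [key G hG]
    obtain ⟨H, hH, hHG⟩ := det_of_jm G hGJ
    exact (h1 G ⟨H, hH, hHG⟩).le
  · rw [key E hE]
    exact h2
end

section
/- Let {E_{1|1}, E_{2|1}} and {E_{1|2}, E_{2|2}} be two two-outcome POVMs on ℂ² that together form a jointly measurable family. Then Re tr(X * (E_{1|1} − E_{2|1}) + Y * (E_{1|2} − E_{2|2})) ≤ 2√2, where X = !![0, 1; 1, 0] and Y = !![0, −i; i, 0] are the Pauli matrices. -/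
open scoped BigOperators Matrix ComplexOrder Kronecker ComplexConjugate

theorem pauli_aux_real (a d x y s t : ℝ) (ha : 0 ≤ a) (hd : 0 ≤ d)
    (hc : x ^ 2 + y ^ 2 ≤ a * d) (hs : s ^ 2 ≤ 1) (ht : t ^ 2 ≤ 1) :
    s * (2 * x) + t * (-(2 * y)) ≤ Real.sqrt 2 * (a + d) := by
  refine abs_le_of_sq_le_sq' ?_ (by positivity) |>.2
  · have h2 : Real.sqrt 2 ^ 2 = 2 := Real.sq_sqrt (by norm_num)
    have h1 : (s * x - t * y) ^ 2 ≤ (s ^ 2 + t ^ 2) * (x ^ 2 + y ^ 2) := by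
      nlinarith [sq_nonneg (s * y + t * x)]
    have h3 : (s ^ 2 + t ^ 2) * (x ^ 2 + y ^ 2) ≤ 2 * (x ^ 2 + y ^ 2) := by
      apply mul_le_mul_of_nonneg_right <;> nlinarith [sq_nonneg x, sq_nonneg y]
    rw [mul_pow, h2]
    nlinarith [sq_nonneg (a - d)]

theorem pauli_aux_psd (G : Matrix (Fin 2) (Fin 2) ℂ) (hG : G.PosSemidef) (s t : ℝ)
    (hs : s ^ 2 ≤ 1) (ht : t ^ 2 ≤ 1) :
    s * ((G 1 0).re + (G 0 1).re) + t * ((G 1 0).im - (G 0 1).im)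
      ≤ Real.sqrt 2 * ((G 0 0).re + (G 1 1).re) := by
  have h0 := Complex.le_def.1 (hG.diag_nonneg (i := 0))
  have h1 := Complex.le_def.1 (hG.diag_nonneg (i := 1))
  have hd := Complex.le_def.1 hG.det_nonneg
  have hh := hG.isHermitian.apply 1 0
  rw [Matrix.det_fin_two, ← hh] at hd
  rw [← hh]
  simp at h0 h1 hd ⊢
  have := pauli_aux_real (G 0 0).re (G 1 1).re (G 0 1).re (G 0 1).im s t h0.1 h1.1
    (by nlinarith [hd.1, h0.2, h1.2]) hs ht
  linarith

theorem pauli_aux_trace (A B : Matrix (Fin 2) (Fin 2) ℂ) :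
    (((!![0, 1; 1, 0] : Matrix (Fin 2) (Fin 2) ℂ) * A
      + (!![0, -Complex.I; Complex.I, 0] : Matrix (Fin 2) (Fin 2) ℂ) * B).trace).re
      = ((A 1 0).re + (A 0 1).re) + ((B 1 0).im - (B 0 1).im) := by
  rw [Matrix.trace_fin_two, Matrix.add_apply, Matrix.add_apply]
  simp only [Matrix.mul_apply, Fin.sum_univ_two]
  simp
  ring

/-- the joint-measurability inequality
`Re tr(X (E_{1|1} - E_{2|1}) + Y (E_{1|2} - E_{2|2})) ≤ 2√2` for two jointly measurable
binary qubit POVMs, with `X`, `Y` the Pauli matrices.  Here `E b y` has outcome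
`b : Fin 2` (0 ↦ outcome 1, 1 ↦ outcome 2) and setting `y : Fin 2`. -/
theorem pauli_joint_measurability_inequality
    (E : Fin 2 → Fin 2 → Matrix (Fin 2) (Fin 2) ℂ)
    (hE : ∀ y, IsPOVM fun b => E b y)
    (hJM : JointlyMeasurable E) :
    (((!![0, 1; 1, 0] : Matrix (Fin 2) (Fin 2) ℂ) * (E 0 0 - E 1 0)
      + (!![0, -Complex.I; Complex.I, 0] : Matrix (Fin 2) (Fin 2) ℂ)
        * (E 0 1 - E 1 1)).trace).re ≤ 2 * Real.sqrt 2 := by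
  obtain ⟨n, G, p, ⟨hG, hsum⟩, hp, hp1, hEG⟩ := hJM
  have hb : ∀ y l, (p 0 y l - p 1 y l) ^ 2 ≤ 1 := by
    intro y l
    have h := hp1 y l
    rw [Fin.sum_univ_two] at h
    nlinarith [hp 0 y l, hp 1 y l, mul_nonneg (hp 0 y l) (hp 1 y l)]
  have key := Finset.sum_le_sum (s := Finset.univ) fun l _ =>
    pauli_aux_psd (G l) (hG l) _ _ (hb 0 l) (hb 1 l)
  have htr : ∑ l, Real.sqrt 2 * ((G l 0 0).re + (G l 1 1).re) = 2 * Real.sqrt 2 := by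
    have e0 := congrArg Complex.re (congrFun (congrFun hsum 0) 0)
    have e1 := congrArg Complex.re (congrFun (congrFun hsum 1) 1)
    simp [Matrix.sum_apply] at e0 e1
    rw [← Finset.mul_sum, Finset.sum_add_distrib, e0, e1]
    ring
  rw [htr] at key
  refine le_of_eq_of_le ?_ key
  rw [pauli_aux_trace]
  simp only [Matrix.sub_apply, hEG, Matrix.sum_apply, Matrix.smul_apply, Complex.sub_re,
    Complex.sub_im, Complex.re_sum, Complex.im_sum, Complex.real_smul, Complex.re_ofReal_mul,
    Complex.im_ofReal_mul]
  simp only [← Finset.sum_sub_distrib, ← Finset.sum_add_distrib]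
  refine Finset.sum_congr rfl fun l _ => ?_
  ring
end

section
/- For p ∈ [0,1], the depolarizing qubit channel C_p(ρ) = p • ρ + (1−p) • (tr ρ / 2) • 1 is entanglement-breaking (i.e. there exist a finite set Λ, a POVM {E_λ} on ℂ² and density matrices {ρ_λ} on ℂ² with C_p(ρ) = ∑_λ tr(E_λ ρ) • ρ_λ for all ρ : Matrix ℂ (Fin 2) (Fin 2)) if and only if p ≤ 1/3. -/
open scoped BigOperators Matrix ComplexOrder Kronecker ComplexConjugate

/-- Trace of a product of positive semidefinite matrices is nonnegative. -/
lemma aux_trace_nonneg {A B : Matrix (Fin 2) (Fin 2) ℂ} (hA : A.PosSemidef) (hB : B.PosSemidef) :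
    0 ≤ (A * B).trace := by
  obtain ⟨C, rfl⟩ : ∃ C : Matrix (Fin 2) (Fin 2) ℂ, A = Cᴴ * C := by
    open scoped MatrixOrder in
    exact CStarAlgebra.nonneg_iff_eq_star_mul_self.mp hA.nonneg
  rw [Matrix.mul_assoc, Matrix.trace_mul_comm]
  exact (hB.mul_mul_conjTranspose_same C).trace_nonneg

lemma aux_trace_le {A B : Matrix (Fin 2) (Fin 2) ℂ} (hA : A.PosSemidef) (hB : B.PosSemidef) :
    (A * B).trace ≤ A.trace * B.trace := by
  have h := aux_trace_nonneg hA
    (hB.transpose.mul_mul_conjTranspose_same (!![0, 1; -1, 0] : Matrix (Fin 2) (Fin 2) ℂ))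
  rw [← sub_nonneg]
  convert h using 1
  simp [Matrix.trace_fin_two, Matrix.mul_apply, Fin.sum_univ_two, Matrix.vecMul, dotProduct]
  ring

/-- Half of `1 + q S` for a Hermitian involution `S` is positive semidefinite. -/
lemma aux_psd {S : Matrix (Fin 2) (Fin 2) ℂ} (h1 : Sᴴ = S) (h2 : S * S = 1) {q : ℝ}
    (h0 : 0 ≤ q) (hq : q ≤ 1) : ((1 / 2 : ℂ) • (1 + (q : ℂ) • S)).PosSemidef := by
  have hP : ((1 / 2 : ℂ) • (1 + S)).PosSemidef := by
    have h := Matrix.posSemidef_conjTranspose_mul_self ((1 / 2 : ℂ) • (1 + S))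
    convert h using 1
    simp only [Matrix.conjTranspose_smul, Matrix.conjTranspose_add, h1, Matrix.conjTranspose_one,
      Matrix.smul_mul, Matrix.mul_smul, add_mul, mul_add, h2, one_mul, mul_one]
    simp
    module
  have ha : (0 : ℂ) ≤ (((1 - q) / 2 : ℝ) : ℂ) := by
    rw [Complex.zero_le_real]; linarith
  have hb : (0 : ℂ) ≤ (q : ℂ) := by
    rw [Complex.zero_le_real]; exact h0
  have h := (Matrix.PosSemidef.one.smul ha).add (hP.smul hb)
  convert h using 1
  push_cast
  module

/-- The six signed Pauli matrices. -/
noncomputable def auxS : Fin 6 → Matrix (Fin 2) (Fin 2) ℂ :=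
  ![!![0, 1; 1, 0], !![0, -1; -1, 0], !![0, -Complex.I; Complex.I, 0],
    !![0, Complex.I; -Complex.I, 0], !![1, 0; 0, -1], !![-1, 0; 0, 1]]

lemma auxS_herm (l : Fin 6) : (auxS l)ᴴ = auxS l := by
  fin_cases l <;> ext i j <;> fin_cases i <;> fin_cases j <;> simp [auxS]

lemma auxS_sq (l : Fin 6) : auxS l * auxS l = 1 := by
  fin_cases l <;> ext i j <;> fin_cases i <;> fin_cases j <;> simp [auxS]

lemma auxS_trace (l : Fin 6) : (auxS l).trace = 0 := by
  fin_cases l <;> simp [auxS, Matrix.trace_fin_two]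

/-- the depolarizing qubit channel
`C_p(ρ) = p • ρ + (1-p) • (tr ρ / 2) • 1` is entanglement-breaking iff `p ≤ 1/3`. -/
theorem depolarizing_entanglement_breaking_iff
    (p : ℝ) (hp0 : 0 ≤ p) (hp1 : p ≤ 1) :
    (∃ (n : ℕ) (E : Fin n → Matrix (Fin 2) (Fin 2) ℂ)
        (ρs : Fin n → Matrix (Fin 2) (Fin 2) ℂ),
      IsPOVM E ∧
      (∀ l, (ρs l).PosSemidef ∧ (ρs l).trace = 1) ∧
      (∀ ρ : Matrix (Fin 2) (Fin 2) ℂ,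
        (p : ℂ) • ρ + (((1 : ℂ) - p) * (ρ.trace / 2)) • (1 : Matrix (Fin 2) (Fin 2) ℂ)
          = ∑ l, (E l * ρ).trace • ρs l)) ↔ p ≤ 1 / 3 := by
  constructor
  · rintro ⟨n, E, R, ⟨hE, hsum⟩, hR, h⟩
    have key : (1 + 3 * p : ℂ) = ∑ l, (E l * R l).trace := by
      have e (i j : Fin 2) := congrFun (congrFun (h (Matrix.single i j 1)) i) j
      have e00 := e 0 0
      have e01 := e 0 1
      have e10 := e 1 0
      have e11 := e 1 1
      simp [Matrix.sum_apply, Matrix.trace_fin_two, Matrix.mul_apply, Fin.sum_univ_two,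
        Matrix.single_apply] at e00 e01 e10 e11
      have : ∑ l, (E l * R l).trace = (∑ l, E l 0 0 * R l 0 0) + (∑ l, E l 1 0 * R l 0 1)
          + (∑ l, E l 0 1 * R l 1 0) + (∑ l, E l 1 1 * R l 1 1) := by
        simp only [← Finset.sum_add_distrib]
        refine Finset.sum_congr rfl fun l _ => ?_
        simp [Matrix.trace_fin_two, Matrix.mul_apply, Fin.sum_univ_two]
        ring
      rw [this, ← e00, ← e01, ← e10, ← e11]
      ring
    have le : ∑ l, (E l * R l).trace ≤ ∑ l, (E l).trace := by
      refine Finset.sum_le_sum fun l _ => ?_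
      have := aux_trace_le (hE l) (hR l).1
      rwa [(hR l).2, mul_one] at this
    rw [← key, ← Matrix.trace_sum, hsum] at le
    have := (Complex.le_def.mp le).1
    simp at this
    linarith
  · intro hp
    refine ⟨6, fun l => (1 / 3 : ℂ) • ((1 / 2 : ℂ) • (1 + ((1 : ℝ) : ℂ) • auxS l)),
      fun l => (1 / 2 : ℂ) • (1 + ((3 * p : ℝ) : ℂ) • auxS l), ⟨fun l => ?_, ?_⟩,
      fun l => ⟨?_, ?_⟩, fun ρ => ?_⟩
    · have h3 : (0 : ℂ) ≤ 1 / 3 := by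
        have : (0 : ℂ) ≤ ((1 / 3 : ℝ) : ℂ) := by
          rw [Complex.zero_le_real]; norm_num
        simpa using this
      exact (aux_psd (auxS_herm l) (auxS_sq l) zero_le_one le_rfl).smul h3
    · ext i j
      fin_cases i <;> fin_cases j <;> simp [Fin.sum_univ_six, auxS] <;> ring
    · exact aux_psd (auxS_herm l) (auxS_sq l) (by linarith) (by linarith)
    · simp [Matrix.trace_smul, Matrix.trace_add, auxS_trace]
    · have hI : Complex.I ^ 2 = -1 := Complex.I_sq
      ext i j
      fin_cases i <;> fin_cases j <;>
        simp [Fin.sum_univ_six, auxS, Matrix.trace_fin_two, Matrix.mul_apply] <;>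
        ring_nf <;> simp only [hI] <;> ring
end

section
/- For every p with 0 ≤ p ≤ 1/2 and every finite family of rank-one orthogonal projections P_y on ℂ² (y in a finite set Y), the family of two-outcome noisy POVMs {E_{1|y}, E_{2|y}} with E_{1|y} = p • P_y + ((1−p)/2) • 1 and E_{2|y} = p • (1 − P_y) + ((1−p)/2) • 1 is jointly measurable. (These are the measurements induced on the input of the depolarizing channel C_p by projective measurements on its output.) -/
open scoped BigOperators Matrix ComplexOrder Kronecker ComplexConjugate

open MeasureTheory in
lemma jm_integrable :
    Integrable (fun x : EuclideanSpace ℝ (Fin 3) => Real.exp (-‖x‖ ^ 2) * ‖x‖) := by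
  refine (integrable_fun_norm_addHaar (volume : Measure (EuclideanSpace ℝ (Fin 3)))
    (f := fun r : ℝ => Real.exp (-r ^ 2) * r)).2 ?_
  have h := integrableOn_rpow_mul_exp_neg_rpow (p := 2) (s := 3) (by norm_num) (by norm_num)
  refine h.congr_fun ?_ measurableSet_Ioi
  intro r _
  simp only [finrank_euclideanSpace, Fintype.card_fin, smul_eq_mul, Nat.add_one_sub_one]
  have h3 : r ^ (3 : ℝ) = r ^ 3 := by exact_mod_cast Real.rpow_natCast r 3
  have h2 : r ^ (2 : ℝ) = r ^ 2 := by exact_mod_cast Real.rpow_natCast r 2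
  rw [h3, h2]
  ring

open MeasureTheory in
lemma jm_integral_norm :
    ∫ x : EuclideanSpace ℝ (Fin 3), Real.exp (-‖x‖ ^ 2) * ‖x‖ = 2 * Real.pi := by
  have h := integral_fun_norm_addHaar (volume : Measure (EuclideanSpace ℝ (Fin 3)))
    (fun r : ℝ => Real.exp (-r ^ 2) * r)
  rw [h]
  have h1 := integral_rpow_mul_exp_neg_rpow (p := 2) (q := 3) (by norm_num) (by norm_num)
  have h2 : ∫ y in Set.Ioi (0 : ℝ), y ^ (Module.finrank ℝ (EuclideanSpace ℝ (Fin 3)) - 1) •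
      (Real.exp (-y ^ 2) * y) = 1 / 2 := by
    have h5 : (1 / 2 : ℝ) * Real.Gamma ((3 + 1) / 2) = 1 / 2 := by
      norm_num
    rw [← h5, ← h1]
    refine setIntegral_congr_fun measurableSet_Ioi ?_
    intro r _
    simp only [finrank_euclideanSpace, Fintype.card_fin, smul_eq_mul]
    have h3 : r ^ (3 : ℝ) = r ^ 3 := by exact_mod_cast Real.rpow_natCast r 3
    have h2 : r ^ (2 : ℝ) = r ^ 2 := by exact_mod_cast Real.rpow_natCast r 2
    rw [h3, h2]
    norm_num
    ring
  rw [h2, Measure.real, EuclideanSpace.volume_ball_fin_three]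
  have := Real.pi_pos
  simp only [finrank_euclideanSpace, Fintype.card_fin, ENNReal.ofReal_one, one_pow, one_mul]
  rw [ENNReal.toReal_ofReal (by positivity)]
  simp only [smul_eq_mul, nsmul_eq_mul]
  push_cast
  ring

open MeasureTheory in
lemma jm_integral_coord :
    ∫ x : EuclideanSpace ℝ (Fin 3), Real.exp (-‖x‖ ^ 2) * |x 0| = Real.pi := by
  rw [← (PiLp.volume_preserving_toLp (Fin 3)).integral_comp
    (MeasurableEquiv.toLp 2 (Fin 3 → ℝ)).measurableEmbedding]
  have h := integral_fintype_prod_volume_eq_prod (ι := Fin 3) (E := fun _ => ℝ)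
    (fun i t => Real.exp (-1 * t ^ 2) * (if i = 0 then |t| else 1))
  have e : ∀ x : Fin 3 → ℝ, Real.exp (-‖WithLp.toLp 2 x‖ ^ 2) * |(WithLp.toLp 2 x) 0| =
      ∏ i, (Real.exp (-1 * x i ^ 2) * (if i = 0 then |x i| else 1)) := by
    intro x
    rw [EuclideanSpace.norm_sq_eq]
    simp only [Fin.sum_univ_three, Fin.prod_univ_three, Real.norm_eq_abs, sq_abs]
    simp only [if_true, Fin.reduceEq, if_false, mul_one, neg_add, Real.exp_add, one_ne_zero,
      neg_mul, one_mul]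
    ring
  simp_rw [e]
  rw [h]
  have h1 : ∫ t : ℝ, Real.exp (-1 * t ^ 2) * |t| = 1 := by
    have := integral_comp_abs (f := fun t => Real.exp (-1 * t ^ 2) * t)
    simp only [sq_abs] at this
    rw [this]
    have h1 := integral_rpow_mul_exp_neg_rpow (p := 2) (q := 1) (by norm_num) (by norm_num)
    have h5 : (1 / 2 : ℝ) * Real.Gamma ((1 + 1) / 2) = 1 / 2 := by norm_num
    rw [h5] at h1
    have h6 : ∫ t in Set.Ioi (0 : ℝ), Real.exp (-1 * t ^ 2) * t = 1 / 2 := by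
      rw [← h1]
      refine setIntegral_congr_fun measurableSet_Ioi ?_
      intro r _
      have h2 : r ^ (2 : ℝ) = r ^ 2 := by exact_mod_cast Real.rpow_natCast r 2
      simp only [h2, Real.rpow_one]
      ring_nf
    rw [h6]; norm_num
  have h2 := integral_gaussian 1
  simp only [Fin.prod_univ_three, if_true, Fin.reduceEq, if_false, mul_one, one_ne_zero, h1, h2]
  rw [one_mul, div_one, Real.mul_self_sqrt Real.pi_pos.le]

open MeasureTheory in
lemma jm_integral_inner (n : EuclideanSpace ℝ (Fin 3)) (hn : ‖n‖ = 1) :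
    ∫ x : EuclideanSpace ℝ (Fin 3), Real.exp (-‖x‖ ^ 2) * |inner ℝ x n| = Real.pi := by
  set e : EuclideanSpace ℝ (Fin 3) := EuclideanSpace.single 0 1 with he
  have hR := Submodule.reflection_sub (v := n) (w := e) (by simp [he, hn])
  set R := (ℝ ∙ (n - e))ᗮ.reflection
  rw [← jm_integral_coord, ← R.measurePreserving.integral_comp
    R.toHomeomorph.measurableEmbedding (fun x => Real.exp (-‖x‖ ^ 2) * |x 0|)]
  congr 1
  ext x
  rw [R.norm_map, ← R.inner_map_map x n, hR, he]
  simp [EuclideanSpace.inner_single_right]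

open MeasureTheory in
lemma jm_integral_sign_norm (n : EuclideanSpace ℝ (Fin 3)) :
    ∫ x : EuclideanSpace ℝ (Fin 3), ((SignType.sign (inner ℝ x n) : SignType) : ℝ) *
      (Real.exp (-‖x‖ ^ 2) * ‖x‖) = 0 := by
  have h := integral_neg_eq_self (fun x : EuclideanSpace ℝ (Fin 3) =>
    ((SignType.sign (inner ℝ x n) : SignType) : ℝ) * (Real.exp (-‖x‖ ^ 2) * ‖x‖)) volume
  simp only [inner_neg_left, Left.sign_neg, SignType.coe_neg, norm_neg, neg_mul] at h
  rw [integral_neg] at h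
  linarith

open MeasureTheory in
lemma jm_integrable_smul :
    Integrable (fun x : EuclideanSpace ℝ (Fin 3) => Real.exp (-‖x‖ ^ 2) • x) := by
  refine jm_integrable.mono' (by fun_prop) ?_
  filter_upwards with x
  simp [norm_smul]

instance jmSignMeas : MeasurableSpace SignType := ⊤

instance jmSignDisc : DiscreteMeasurableSpace SignType := ⟨fun _ => trivial⟩

lemma jm_coe_abs (s : SignType) : |((s : SignType) : ℝ)| ≤ 1 := by
  cases s <;> simp

lemma jm_measurable_sign : Measurable (SignType.sign : ℝ → SignType) := by
  have h : (SignType.sign : ℝ → SignType) = fun x => if 0 < x then 1 else if x < 0 then -1 else 0 := by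
    ext x; rw [sign_apply]
  rw [h]
  exact Measurable.ite measurableSet_Ioi measurable_const
    (Measurable.ite measurableSet_Iio measurable_const measurable_const)

open MeasureTheory in
lemma jm_integral_sign_smul (n : EuclideanSpace ℝ (Fin 3)) (hn : ‖n‖ = 1) :
    ∫ x : EuclideanSpace ℝ (Fin 3), ((SignType.sign (inner ℝ x n) : SignType) : ℝ) •
      (Real.exp (-‖x‖ ^ 2) • x) = Real.pi • n := by
  set R := (ℝ ∙ n).reflection with hR
  have hRn : R n = n := Submodule.reflection_mem_subspace_eq_self
    (Submodule.mem_span_singleton_self n)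
  have hRx : ∀ x, R x = (2 * inner ℝ x n) • n - x := by
    intro x
    rw [hR, Submodule.reflection_apply, Submodule.starProjection_unit_singleton ℝ hn,
      real_inner_comm, two_nsmul, mul_smul, two_smul]
  set f : EuclideanSpace ℝ (Fin 3) → EuclideanSpace ℝ (Fin 3) := fun x =>
    ((SignType.sign (inner ℝ x n) : SignType) : ℝ) • (Real.exp (-‖x‖ ^ 2) • x) with hf
  have hm : Measurable (fun x : EuclideanSpace ℝ (Fin 3) =>
      ((SignType.sign (inner ℝ x n) : SignType) : ℝ)) :=
    (measurable_of_finite (fun s : SignType => (s : ℝ))).comp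
      (jm_measurable_sign.comp (by fun_prop))
  have hfi : Integrable f := by
    refine jm_integrable.mono' (hm.smul (by fun_prop)).aestronglyMeasurable ?_
    filter_upwards with x
    rw [hf]
    simp only [norm_smul, Real.norm_eq_abs, Real.abs_exp]
    refine mul_le_of_le_one_left (by positivity) ?_
    exact jm_coe_abs _
  have h1 : ∫ x, f (R x) = ∫ x, f x := R.measurePreserving.integral_comp
    R.toHomeomorph.measurableEmbedding f
  have h2 : ∀ x, f (R x) = (2 * (Real.exp (-‖x‖ ^ 2) * |inner ℝ x n|)) • n - f x := by
    intro x
    have h3 : inner ℝ (R x) n = inner ℝ x n := by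
      conv_lhs => rw [← hRn, R.inner_map_map]
    simp only [hf, h3, R.norm_map]
    simp only [hRx, smul_sub, smul_smul]
    rw [← sign_mul_self (inner ℝ x n : ℝ)]
    congr 2
    ring
  have hi : Integrable (fun x : EuclideanSpace ℝ (Fin 3) =>
      (2 * (Real.exp (-‖x‖ ^ 2) * |inner ℝ x n|)) • n) := by
    have : (fun x : EuclideanSpace ℝ (Fin 3) =>
      (2 * (Real.exp (-‖x‖ ^ 2) * |inner ℝ x n|)) • n) = fun x => f (R x) + f x := by
      ext1 x; rw [h2]; simp
    rw [this]
    exact ((R.measurePreserving.integrable_comp_emb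
      R.toHomeomorph.measurableEmbedding).2 hfi).add hfi
  simp_rw [h2] at h1
  rw [integral_sub hi hfi, integral_smul_const, integral_const_mul, jm_integral_inner n hn,
    sub_eq_iff_eq_add, ← two_smul ℝ (∫ x, f x), mul_smul] at h1
  exact (smul_right_injective _ (two_ne_zero (α := ℝ)) h1).symm

/-- `A • 1 + v · σ`. -/
noncomputable def jmM : (ℝ × EuclideanSpace ℝ (Fin 3)) →ₗ[ℝ] Matrix (Fin 2) (Fin 2) ℂ where
  toFun q := !![(q.1 : ℂ) + (q.2 2 : ℂ), (q.2 0 : ℂ) - Complex.I * (q.2 1 : ℂ);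
    (q.2 0 : ℂ) + Complex.I * (q.2 1 : ℂ), (q.1 : ℂ) - (q.2 2 : ℂ)]
  map_add' q r := by
    ext i j; fin_cases i <;> fin_cases j <;> simp <;> ring
  map_smul' c q := by
    ext i j; fin_cases i <;> fin_cases j <;> simp <;> ring

lemma jmM_psd (A : ℝ) (v : EuclideanSpace ℝ (Fin 3)) (h : ‖v‖ ≤ A) : (jmM (A, v)).PosSemidef := by
  have hA : 0 ≤ A := (norm_nonneg v).trans h
  have h2 : v 0 ^ 2 + v 1 ^ 2 + v 2 ^ 2 ≤ A ^ 2 := by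
    have := pow_le_pow_left₀ (norm_nonneg v) h 2
    rw [EuclideanSpace.norm_sq_eq] at this
    simpa [Fin.sum_univ_three] using this
  refine Matrix.PosSemidef.of_dotProduct_mulVec_nonneg ?_ ?_
  · ext i j; fin_cases i <;> fin_cases j <;> simp [jmM, Matrix.conjTranspose_apply] <;> ring
  · intro x
    obtain ⟨a, b, ha⟩ : ∃ a b : ℂ, x = ![a, b] := ⟨x 0, x 1, by ext i; fin_cases i <;> rfl⟩
    subst ha
    obtain ⟨a1, a2⟩ := a
    obtain ⟨b1, b2⟩ := b
    set s0 := 2 * (a1 * b1 + a2 * b2) with hs0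
    set s1 := 2 * (a1 * b2 - a2 * b1) with hs1
    set s2 := a1 ^ 2 + a2 ^ 2 - b1 ^ 2 - b2 ^ 2 with hs2
    set N := a1 ^ 2 + a2 ^ 2 + b1 ^ 2 + b2 ^ 2 with hN
    have hNN : 0 ≤ N := by positivity
    have hs : s0 ^ 2 + s1 ^ 2 + s2 ^ 2 = N ^ 2 := by rw [hs0, hs1, hs2, hN]; ring
    have key : (v 0 * s0 + v 1 * s1 + v 2 * s2) ^ 2 ≤ (A * N) ^ 2 := by
      have := mul_le_mul_of_nonneg_right h2 (sq_nonneg N)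
      nlinarith [sq_nonneg (v 0 * s1 - v 1 * s0), sq_nonneg (v 0 * s2 - v 2 * s0),
        sq_nonneg (v 1 * s2 - v 2 * s1)]
    have k2 := (abs_le.1 (abs_le_of_sq_le_sq key (mul_nonneg hA hNN))).1
    rw [Complex.nonneg_iff]
    simp [jmM, Matrix.mulVec, dotProduct, Fin.sum_univ_two]
    constructor
    · rw [hs0, hs1, hs2, hN] at k2
      nlinarith
    · ring

open MeasureTheory in
lemma jm_sum_fiber {E F S : Type*} [MeasureSpace E] [NormedAddCommGroup F] [NormedSpace ℝ F]
    [Fintype S] [MeasurableSpace S] [MeasurableSingletonClass S]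
    (T : E → S) (hT : Measurable T) (c : S → ℝ) (f : E → F) (hf : Integrable f) :
    ∑ s, c s • ∫ x in T ⁻¹' {s}, f x = ∫ x, c (T x) • f x := by
  classical
  have hm : ∀ s, MeasurableSet (T ⁻¹' {s}) := fun s => hT (measurableSet_singleton s)
  simp_rw [← integral_indicator (hm _), ← integral_smul]
  rw [← integral_finsetSum _ (fun s _ => (hf.indicator (hm s)).fun_smul (c s))]
  congr 1
  ext x
  rw [Finset.sum_eq_single (T x)]
  · simp
  · intro s _ hs
    rw [Set.indicator_of_notMem, smul_zero]
    simpa using hs.symm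
  · simp

lemma jm_bloch (P : Matrix (Fin 2) (Fin 2) ℂ)
    (hP : Pᴴ = P ∧ P * P = P ∧ P.trace = 1) :
    ∃ n : EuclideanSpace ℝ (Fin 3), ‖n‖ = 1 ∧ P = (1 / 2 : ℝ) • jmM (1, n) := by
  obtain ⟨h1, h2, h3⟩ := hP
  have e00 := congrFun (congrFun h1 0) 0
  have e01 := congrFun (congrFun h1 0) 1
  have q00 := congrFun (congrFun h2 0) 0
  simp only [Matrix.conjTranspose_apply, Matrix.mul_apply, Fin.sum_univ_two, Matrix.trace,
    Matrix.diag_apply, Complex.ext_iff, Complex.star_def, Complex.conj_re, Complex.conj_im,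
    Complex.add_re, Complex.add_im, Complex.mul_re, Complex.mul_im, Complex.one_re,
    Complex.one_im] at e00 e01 q00 h3
  refine ⟨!₂[2 * (P 1 0).re, 2 * (P 1 0).im, 2 * (P 0 0).re - 1], ?_, ?_⟩
  · have hz : (P 0 0).im = 0 := by linarith [e00.2]
    have q := q00.1
    rw [← e01.1, ← e01.2, hz] at q
    rw [← sq_eq_sq₀ (norm_nonneg _) zero_le_one, EuclideanSpace.norm_sq_eq]
    simp [Fin.sum_univ_three]
    nlinarith
  · have hz : (P 0 0).im = 0 := by linarith [e00.2]
    ext i j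
    fin_cases i <;> fin_cases j <;> simp [jmM, Complex.ext_iff] <;>
      (try constructor) <;> linarith [e01.1, e01.2, h3.1, h3.2]

open MeasureTheory in
lemma jm_core {Y : Type} [Fintype Y] (n : Y → EuclideanSpace ℝ (Fin 3)) (hn : ∀ y, ‖n y‖ = 1) :
    ∃ (k : ℕ) (G : Fin k → Matrix (Fin 2) (Fin 2) ℂ) (ε : Y → Fin k → ℝ), IsPOVM G ∧
      (∀ y l, |ε y l| ≤ 1) ∧ (∀ y, ∑ l, ε y l • G l = (1 / 2 : ℝ) • jmM (0, n y)) := by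
  classical
  let T : EuclideanSpace ℝ (Fin 3) → (Y → SignType) := fun x y => SignType.sign (inner ℝ x (n y))
  have hT : Measurable T := measurable_pi_lambda _ fun y =>
    jm_measurable_sign.comp (by fun_prop)
  let A : (Y → SignType) → ℝ := fun s => ∫ x in T ⁻¹' {s}, Real.exp (-‖x‖ ^ 2) * ‖x‖
  let V : (Y → SignType) → EuclideanSpace ℝ (Fin 3) :=
    fun s => ∫ x in T ⁻¹' {s}, Real.exp (-‖x‖ ^ 2) • x
  have hVA : ∀ s, ‖V s‖ ≤ A s := by
    intro s
    refine (norm_integral_le_integral_norm _).trans (le_of_eq ?_)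
    simp [A, norm_smul]
  have hpi := Real.pi_pos
  let G : (Y → SignType) → Matrix (Fin 2) (Fin 2) ℂ :=
    fun s => (1 / (2 * Real.pi)) • jmM (A s, V s)
  have hG : ∀ c : (Y → SignType) → ℝ, ∑ s, c s • G s = (1 / (2 * Real.pi)) •
      jmM (∫ x, c (T x) • (Real.exp (-‖x‖ ^ 2) * ‖x‖), ∫ x, c (T x) • (Real.exp (-‖x‖ ^ 2) • x)) := by
    intro c
    rw [← jm_sum_fiber T hT c _ jm_integrable, ← jm_sum_fiber T hT c _ jm_integrable_smul]
    have : ((∑ s, c s • A s, ∑ s, c s • V s) : ℝ × EuclideanSpace ℝ (Fin 3)) =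
        ∑ s, c s • (A s, V s) := by
      ext1 <;> simp [Prod.fst_sum, Prod.snd_sum]
    change _ = (1 / (2 * Real.pi)) • jmM (∑ s, c s • A s, ∑ s, c s • V s)
    rw [this, map_sum, Finset.smul_sum]
    refine Finset.sum_congr rfl fun s _ => ?_
    rw [map_smul, smul_comm]
  let e := Fintype.equivFin (Y → SignType)
  refine ⟨_, fun l => G (e.symm l), fun y l => ((e.symm l y : SignType) : ℝ), ⟨?_, ?_⟩, ?_, ?_⟩
  · intro l
    have := (jmM_psd _ _ (hVA (e.symm l))).smul
      (show (0 : ℝ) ≤ 1 / (2 * Real.pi) by positivity)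
    exact this
  · rw [Equiv.sum_comp e.symm G]
    have h := hG (fun _ => 1)
    have hz : ∫ x : EuclideanSpace ℝ (Fin 3), Real.exp (-‖x‖ ^ 2) • x = 0 := by
      have h := integral_neg_eq_self
        (fun x : EuclideanSpace ℝ (Fin 3) => Real.exp (-‖x‖ ^ 2) • x) volume
      simp only [norm_neg, smul_neg] at h
      rw [integral_neg] at h
      have h2 : (2 : ℝ) • ∫ x : EuclideanSpace ℝ (Fin 3), Real.exp (-‖x‖ ^ 2) • x = 0 := by
        rw [two_smul]
        exact add_eq_zero_iff_eq_neg.2 h.symm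
      exact (smul_eq_zero.1 h2).resolve_left two_ne_zero
    simp only [one_smul, jm_integral_norm, hz] at h
    rw [h, ← map_smul]
    ext i j
    fin_cases i <;> fin_cases j <;> simp [jmM] <;> field_simp
  · intro y l
    exact jm_coe_abs _
  · intro y
    rw [Equiv.sum_comp e.symm (fun s => ((s y : SignType) : ℝ) • G s), hG]
    have h1 := jm_integral_sign_norm (n y)
    have h2 := jm_integral_sign_smul (n y) (hn y)
    simp only [T, smul_eq_mul]
    rw [h1, h2, ← map_smul, ← map_smul]
    congr 1
    ext1
    · simp
    · simp only [Prod.smul_mk, smul_smul]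
      congr 1
      field_simp

/-- for `0 ≤ p ≤ 1/2`, the noisy two-outcome POVMs
`E_{1|y} = p P_y + ((1-p)/2) 1`, `E_{2|y} = p (1 - P_y) + ((1-p)/2) 1` obtained from
any family of rank-one projections `P_y` on `ℂ²` are jointly measurable. -/
theorem noisy_projective_jointly_measurable
    (p : ℝ) (hp0 : 0 ≤ p) (hp : p ≤ 1 / 2)
    {Y : Type} [Fintype Y]
    (P : Y → Matrix (Fin 2) (Fin 2) ℂ)
    (hP : ∀ y, (P y)ᴴ = P y ∧ P y * P y = P y ∧ (P y).trace = 1) :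
    JointlyMeasurable (fun (b : Fin 2) (y : Y) =>
      if b = 0 then p • P y + ((1 - p) / 2) • (1 : Matrix (Fin 2) (Fin 2) ℂ)
      else p • ((1 : Matrix (Fin 2) (Fin 2) ℂ) - P y)
        + ((1 - p) / 2) • (1 : Matrix (Fin 2) (Fin 2) ℂ)) := by
  choose n hn hPn using fun y => jm_bloch (P y) (hP y)
  obtain ⟨k, G, ε, hG, hε, hsum⟩ := jm_core n hn
  have hM1 : jmM (1, 0) = 1 := by
    ext i j
    fin_cases i <;> fin_cases j <;> simp [jmM]
  have hPn' : ∀ y, P y = (1 / 2 : ℝ) • 1 + (1 / 2 : ℝ) • jmM (0, n y) := by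
    intro y
    rw [hPn y, ← hM1, ← smul_add, ← map_add]
    simp
  refine ⟨k, G, fun b y l => if b = 0 then 1 / 2 + p * ε y l else 1 / 2 - p * ε y l, hG,
    ?_, ?_, ?_⟩
  · intro b y l
    have h1 := abs_le.1 (hε y l)
    dsimp only
    split_ifs <;> nlinarith [h1.1, h1.2]
  · intro y l
    simp [Fin.sum_univ_two]
    norm_num
  · intro b y
    have hs : ∀ c : ℝ, ∑ l, (1 / 2 + c * ε y l) • G l =
        (1 / 2 : ℝ) • (1 : Matrix (Fin 2) (Fin 2) ℂ) + c • (1 / 2 : ℝ) • jmM (0, n y) := by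
      intro c
      simp_rw [add_smul, mul_smul]
      rw [Finset.sum_add_distrib, ← Finset.smul_sum, ← Finset.smul_sum, hsum, hG.2]
    by_cases hb : b = 0
    · simp only [hb, if_true]
      rw [hs p, hPn' y]
      module
    · simp only [hb, if_false]
      have := hs (-p)
      simp only [neg_mul, ← sub_eq_add_neg] at this
      rw [this, hPn' y]
      module
end

section
/- For every p with 1/2 < p ≤ 1, there exist a finite set Y and rank-one orthogonal projections P_y on ℂ² (y ∈ Y) such that the family of two-outcome noisy POVMs {E_{1|y}, E_{2|y}} with E_{1|y} = p • P_y + ((1−p)/2) • 1 and E_{2|y} = p • (1 − P_y) + ((1−p)/2) • 1 is not jointly measurable. (Hence the non-entanglement-breaking character of the depolarizing channel C_p can be verified with an untrusted measurement device whenever p > 1/2.) -/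
open scoped BigOperators Matrix ComplexOrder Kronecker ComplexConjugate

abbrev E3 := EuclideanSpace ℝ (Fin 3)
noncomputable def sv (M : Matrix (Fin 2) (Fin 2) ℂ) : E3 :=
  !₂[(M 0 1).re, -(M 0 1).im, ((M 0 0).re - (M 1 1).re)/2]
noncomputable def tv (M : Matrix (Fin 2) (Fin 2) ℂ) : ℝ := ((M 0 0).re + (M 1 1).re)/2

noncomputable def ip (v : E3) : Matrix (Fin 2) (Fin 2) ℂ →ₗ[ℝ] ℝ where
  toFun M := inner ℝ (sv M) v
  map_add' A B := by simp [sv, PiLp.inner_apply, Fin.sum_univ_three]; ring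
  map_smul' c A := by simp [sv, PiLp.inner_apply, Fin.sum_univ_three]; ring

noncomputable def tl : Matrix (Fin 2) (Fin 2) ℂ →ₗ[ℝ] ℝ where
  toFun M := tv M
  map_add' A B := by simp [tv]; ring
  map_smul' c A := by simp [tv]; ring

lemma norm_sv_le (M : Matrix (Fin 2) (Fin 2) ℂ) (h : M.PosSemidef) : ‖sv M‖ ≤ tv M := by
  have h0 := h.diag_nonneg (i := 0)
  have h1 := h.diag_nonneg (i := 1)
  have hd := h.det_nonneg
  have hh : M 1 0 = star (M 0 1) := (h.1.apply 1 0).symm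
  rw [Matrix.det_fin_two, hh] at hd
  rw [Complex.le_def] at h0 h1 hd
  simp at h0 h1 hd
  rw [EuclideanSpace.norm_eq]
  apply Real.sqrt_le_iff.2
  simp [sv, tv, Fin.sum_univ_three]
  rw [← h0.2, ← h1.2] at hd
  constructor
  · linarith
  · nlinarith

noncomputable def proj (n : E3) : Matrix (Fin 2) (Fin 2) ℂ :=
  !![((1 + n 2)/2 : ℝ), ((n 0 / 2 : ℝ) : ℂ) - ((n 1 / 2 : ℝ) : ℂ) * Complex.I; ((n 0 / 2 : ℝ) : ℂ) + ((n 1 / 2 : ℝ) : ℂ) * Complex.I, ((1 - n 2)/2 : ℝ)]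

lemma sq_of_norm (n : E3) (h : ‖n‖ = 1) : n 0 ^ 2 + n 1 ^ 2 + n 2 ^ 2 = 1 := by
  have := EuclideanSpace.norm_sq_eq n
  rw [h] at this
  simp [Fin.sum_univ_three] at this
  linarith

lemma proj_spec (n : E3) (h : ‖n‖ = 1) :
    (proj n)ᴴ = proj n ∧ proj n * proj n = proj n ∧ (proj n).trace = 1 := by
  have := sq_of_norm n h
  refine ⟨?_, ?_, ?_⟩
  · ext i j
    fin_cases i <;> fin_cases j <;> simp [proj, Complex.ext_iff]
  · ext i j
    fin_cases i <;> fin_cases j <;> simp [proj, Complex.ext_iff, Matrix.mul_apply] <;> (try constructor) <;> nlinarith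
  · simp [proj, Matrix.trace_fin_two, Complex.ext_iff]; ring

lemma ip_proj (n : E3) (h : ‖n‖ = 1) : ip n (proj n) = 1/2 := by
  have := sq_of_norm n h
  simp [ip, sv, proj, PiLp.inner_apply, Fin.sum_univ_three]
  nlinarith

lemma ip_one (n : E3) : ip n 1 = 0 := by
  simp [ip, sv, PiLp.inner_apply, Fin.sum_univ_three]

lemma exists_unit (v : E3) : ∃ n : E3, ‖n‖ = 1 ∧ v = ‖v‖ • n := by
  by_cases h : v = 0
  · exact ⟨EuclideanSpace.single 0 1, by simp, by simp [h]⟩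
  · have : ‖v‖ ≠ 0 := by simpa using h
    exact ⟨‖v‖⁻¹ • v, by rw [norm_smul]; simp [this], by rw [smul_smul]; simp [this]⟩

lemma key (p : ℝ) (N : ℕ) (v : Fin N → E3) (B : ℝ)
    (hB : ∀ u : E3, ‖u‖ = 1 → ∑ i, |inner ℝ u (v i)| ≤ B) (hlt : B < p * ∑ i, ‖v i‖) :
    ∃ (nY : ℕ) (P : Fin nY → Matrix (Fin 2) (Fin 2) ℂ),
      (∀ y, (P y)ᴴ = P y ∧ P y * P y = P y ∧ (P y).trace = 1) ∧
      ¬ ∃ (n : ℕ) (G : Fin n → Matrix (Fin 2) (Fin 2) ℂ) (q : Fin 2 → Fin nY → Fin n → ℝ),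
    ((∀ b, (G b).PosSemidef) ∧ ∑ b, G b = 1) ∧ (∀ b y l, 0 ≤ q b y l) ∧ (∀ y l, ∑ b, q b y l = 1) ∧
    (∀ b y, (if b = 0 then p • P y + ((1 - p) / 2) • (1 : Matrix (Fin 2) (Fin 2) ℂ)
        else p • ((1 : Matrix (Fin 2) (Fin 2) ℂ) - P y)
          + ((1 - p) / 2) • (1 : Matrix (Fin 2) (Fin 2) ℂ)) = ∑ l, q b y l • G l) := by
  choose n hn hvn using fun i => exists_unit (v i)
  refine ⟨N, fun i => proj (n i), fun i => proj_spec _ (hn i), ?_⟩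
  rintro ⟨m, G, q, ⟨hG, hG1⟩, hq, hq1, hE⟩
  have h1 : ∀ i, p * ‖v i‖ ≤ ∑ l, |inner ℝ (sv (G l)) (v i)| := by
    intro i
    have e0 := congrArg (ip (n i)) (hE 0 i)
    have e1 := congrArg (ip (n i)) (hE 1 i)
    simp [ip_proj _ (hn i), ip_one] at e0 e1
    have e2 : p = ∑ l, (q 0 i l - q 1 i l) * ip (n i) (G l) := by
      simp_rw [sub_mul, Finset.sum_sub_distrib]
      rw [← e0, ← e1]; ring
    have e3 : p ≤ ∑ l, |ip (n i) (G l)| := by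
      rw [e2]
      apply Finset.sum_le_sum
      intro l _
      have a := hq 0 i l
      have b := hq 1 i l
      have c := hq1 i l
      rw [Fin.sum_univ_two] at c
      calc _ ≤ |(q 0 i l - q 1 i l) * ip (n i) (G l)| := le_abs_self _
        _ = |q 0 i l - q 1 i l| * |ip (n i) (G l)| := abs_mul _ _
        _ ≤ 1 * |ip (n i) (G l)| := by
          gcongr
          rw [abs_le]; constructor <;> linarith
        _ = _ := one_mul _
    calc p * ‖v i‖ ≤ (∑ l, |ip (n i) (G l)|) * ‖v i‖ := by gcongr
      _ = ∑ l, |inner ℝ (sv (G l)) (v i)| := by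
        rw [Finset.sum_mul]
        refine Finset.sum_congr rfl fun l _ => ?_
        conv_rhs => rw [hvn i, inner_smul_right, abs_mul, abs_norm, mul_comm]
        rfl
  have hB0 : 0 ≤ B := le_trans (Finset.sum_nonneg fun i _ => abs_nonneg _)
    (hB (EuclideanSpace.single 0 1) (by simp))
  have h2 : ∀ l, ∑ i, |inner ℝ (sv (G l)) (v i)| ≤ tl (G l) * B := by
    intro l
    obtain ⟨u, hu, hs⟩ := exists_unit (sv (G l))
    have := hB u hu
    calc _ = ‖sv (G l)‖ * ∑ i, |inner ℝ u (v i)| := by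
          rw [Finset.mul_sum]
          refine Finset.sum_congr rfl fun i _ => ?_
          conv_lhs => rw [hs, inner_smul_left, abs_mul]
          simp
      _ ≤ ‖sv (G l)‖ * B := by gcongr
      _ ≤ _ := by
        gcongr
        exact norm_sv_le _ (hG l)
  have h3 : ∑ l, tl (G l) = 1 := by
    rw [← map_sum, hG1]; simp [tl, tv]
  have : p * ∑ i, ‖v i‖ ≤ B := by
    rw [Finset.mul_sum]
    calc _ ≤ ∑ i, ∑ l, |inner ℝ (sv (G l)) (v i)| := Finset.sum_le_sum fun i _ => h1 i
      _ = ∑ l, ∑ i, |inner ℝ (sv (G l)) (v i)| := Finset.sum_comm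
      _ ≤ ∑ l, tl (G l) * B := Finset.sum_le_sum fun l _ => h2 l
      _ = B := by rw [← Finset.sum_mul, h3, one_mul]
  linarith

open MeasureTheory in
lemma gauss_int (k : ℕ) : Integrable (fun v : E3 => ‖v‖ ^ k * Real.exp (-‖v‖ ^ 2)) := by
  have h := (integrable_fun_norm_addHaar (volume : Measure E3)
    (f := fun y : ℝ => y ^ k * Real.exp (-y ^ 2))).2 ?_
  · exact h
  · have h := integrableOn_rpow_mul_exp_neg_mul_sq (b := 1) one_pos
      (s := ((k + 2 : ℕ) : ℝ)) (by push_cast; linarith [(Nat.cast_nonneg k : (0:ℝ) ≤ k)])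
    refine h.congr_fun (fun x _ => ?_) measurableSet_Ioi
    simp only [Real.rpow_natCast, finrank_euclideanSpace, Fintype.card_fin, smul_eq_mul]
    ring_nf

open MeasureTheory in
lemma gauss_norm : ∫ v : E3, ‖v‖ * Real.exp (-‖v‖ ^ 2) = 2 * Real.pi := by
  have h := integral_fun_norm_addHaar (volume : Measure E3) (fun y : ℝ => y * Real.exp (-y ^ 2))
  rw [h]
  have e : ∫ y in Set.Ioi (0:ℝ), y ^ (Module.finrank ℝ E3 - 1) • (y * Real.exp (-y ^ 2)) = 1 / 2 := by
    have h2 := integral_rpow_mul_exp_neg_rpow (p := 2) (q := 3) (by norm_num) (by norm_num)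
    have : Real.Gamma ((3 + 1) / 2) = 1 := by norm_num
    rw [this] at h2
    rw [← mul_one (1 / 2 : ℝ), ← h2]
    refine setIntegral_congr_fun measurableSet_Ioi (fun x _ => ?_)
    have e3 : x ^ (3:ℝ) = x ^ 3 := by exact_mod_cast Real.rpow_natCast x 3
    have e2 : x ^ (2:ℝ) = x ^ 2 := by exact_mod_cast Real.rpow_natCast x 2
    simp only [e3, e2, finrank_euclideanSpace, Fintype.card_fin, smul_eq_mul]
    ring_nf
  rw [e]
  simp only [finrank_euclideanSpace, Fintype.card_fin, Measure.real, EuclideanSpace.volume_ball_fin_three]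
  rw [ENNReal.toReal_mul, ENNReal.toReal_ofReal (by positivity)]
  simp
  ring

open MeasureTheory in
lemma gauss_abs0 : ∫ v : E3, |v 0| * Real.exp (-‖v‖ ^ 2) = Real.pi := by
  rw [← (PiLp.volume_preserving_toLp (Fin 3)).integral_comp
    (MeasurableEquiv.toLp 2 (Fin 3 → ℝ)).measurableEmbedding]
  have h := integral_fintype_prod_volume_eq_prod (𝕜 := ℝ) (E := fun _ : Fin 3 => ℝ)
    (fun i x => (if i = 0 then |x| else 1) * Real.exp (-1 * x ^ 2))
  simp only [Fin.prod_univ_three] at h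
  have a : ∫ x : ℝ, |x| * Real.exp (-1 * x ^ 2) = 1 := by
    have h1 := integral_comp_abs (f := fun x => x * Real.exp (-1 * x ^ 2))
    simp only [sq_abs] at h1
    rw [h1]
    have h2 := integral_rpow_mul_exp_neg_rpow (p := 2) (q := 1) (by norm_num) (by norm_num)
    have : Real.Gamma ((1 + 1) / 2) = 1 := by norm_num
    rw [this] at h2
    simp at h2
    simp [h2]
  simp at h a
  rw [a] at h
  have g := integral_gaussian 1
  simp at g
  rw [g, one_mul, Real.mul_self_sqrt Real.pi_pos.le] at h
  rw [← h]
  congr 1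
  ext x
  rw [EuclideanSpace.norm_sq_eq]
  simp only [Fin.sum_univ_three, Real.norm_eq_abs, sq_abs]
  rw [mul_assoc, mul_assoc, ← Real.exp_add, ← Real.exp_add]
  congr 2
  ring

open MeasureTheory in
lemma gauss_abs (u : E3) (hu : ‖u‖ = 1) :
    ∫ v : E3, |inner ℝ u v| * Real.exp (-‖v‖ ^ 2) = Real.pi := by
  have hr := Submodule.reflection_sub (v := u) (w := EuclideanSpace.single 0 (1:ℝ)) (by simp [hu])
  set R := (Submodule.span ℝ {u - EuclideanSpace.single 0 (1:ℝ)})ᗮ.reflection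
  rw [← gauss_abs0, ← (R.measurePreserving).integral_comp R.toHomeomorph.measurableEmbedding
    (fun v : E3 => |v 0| * Real.exp (-‖v‖ ^ 2))]
  congr 1
  ext v
  have : (R v) 0 = inner ℝ u v := by
    rw [← R.inner_map_map u v, hr, EuclideanSpace.inner_single_left]; simp
  rw [this, R.norm_map]

noncomputable def kf (p : ℝ) : C(E3, C(Metric.sphere (0 : E3) 1, ℝ)) :=
  ContinuousMap.curry ⟨fun x => |inner ℝ (x.2 : E3) x.1| - p * ‖x.1‖, by fun_prop⟩

lemma kf_apply (p : ℝ) (v : E3) (u : Metric.sphere (0 : E3) 1) :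
    kf p v u = |inner ℝ (u : E3) v| - p * ‖v‖ := rfl

lemma kf_norm (p : ℝ) (v : E3) : ‖kf p v‖ ≤ (1 + |p|) * ‖v‖ := by
  rw [ContinuousMap.norm_le _ (by positivity)]
  intro u
  rw [kf_apply, Real.norm_eq_abs]
  have h1 := abs_real_inner_le_norm (u : E3) v
  have h2 : ‖(u : E3)‖ = 1 := by simpa using u.2
  rw [h2, one_mul] at h1
  calc _ ≤ |(|inner ℝ (u : E3) v|)| + |p * ‖v‖| := abs_sub _ _
    _ ≤ ‖v‖ + |p| * ‖v‖ := by rw [abs_abs, abs_mul, abs_norm]; gcongr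
    _ = _ := by ring

open MeasureTheory in
lemma exists_family (p : ℝ) (hp : 1 / 2 < p) : ∃ (N : ℕ) (v : Fin N → E3) (B : ℝ),
    (∀ u : E3, ‖u‖ = 1 → ∑ i, |inner ℝ u (v i)| ≤ B) ∧ B < p * ∑ i, ‖v i‖ := by
  set d : E3 → ℝ := fun v => Real.exp (-‖v‖ ^ 2) with hd
  have hdm : Measurable fun v => ENNReal.ofReal (d v) := by fun_prop
  have hdi : Integrable d := by simpa using gauss_int 0
  have hdt : ∀ᵐ v : E3, ENNReal.ofReal (d v) < ⊤ := by simp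
  have hdr : ∀ v, (ENNReal.ofReal (d v)).toReal = d v :=
    fun v => ENNReal.toReal_ofReal (Real.exp_pos _).le
  set μ : Measure E3 := volume.withDensity fun v => ENNReal.ofReal (d v) with hμ
  have : IsFiniteMeasure μ := isFiniteMeasure_withDensity_ofReal hdi.2
  have hn : ∫ v, ‖v‖ ∂μ = 2 * Real.pi := by
    rw [hμ, integral_withDensity_eq_integral_toReal_smul hdm hdt, ← gauss_norm]
    simp only [hdr]
    simp only [smul_eq_mul, mul_comm, hd]
  have hni : Integrable (fun v : E3 => ‖v‖) μ := by
    rw [hμ, integrable_withDensity_iff_integrable_smul' hdm hdt]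
    have := gauss_int 1
    simp only [hdr]
    simpa only [smul_eq_mul, mul_comm, hd, pow_one] using this
  have hi : ∀ u : E3, ‖u‖ = 1 → ∫ v, |inner ℝ u v| ∂μ = Real.pi := by
    intro u hu
    rw [hμ, integral_withDensity_eq_integral_toReal_smul hdm hdt, ← gauss_abs u hu]
    simp only [hdr]
    simp only [smul_eq_mul, mul_comm, hd]
  have hii : ∀ u : E3, ‖u‖ = 1 → Integrable (fun v => |inner ℝ u v|) μ := by
    intro u hu
    refine hni.mono' (by fun_prop) (Filter.Eventually.of_forall fun v => ?_)
    have := abs_real_inner_le_norm u v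
    simpa [hu] using this
  have hne : NeZero μ := ⟨fun h => by
    rw [h] at hn; simp at hn⟩
  have hki : Integrable (kf p) μ := by
    refine (hni.const_mul (1 + |p|)).mono' (kf p).continuous.aestronglyMeasurable ?_
    exact Filter.Eventually.of_forall fun v => kf_norm p v
  have hmem := (convex_convexHull ℝ (Set.range (kf p))).closure.average_mem isClosed_closure
    (μ := μ) (f := kf p)
    (Filter.Eventually.of_forall fun v => subset_closure (subset_convexHull ℝ _ ⟨v, rfl⟩)) hki
  have hm : 0 < μ.real Set.univ := by
    rw [Measure.real, ENNReal.toReal_pos_iff]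
    exact ⟨by simpa [pos_iff_ne_zero] using hne.out, measure_lt_top _ _⟩
  set δ := (μ.real Set.univ)⁻¹ * ((p - 1 / 2) * (2 * Real.pi)) with hδ
  have hδ0 : 0 < δ := by
    have : 0 < p - 1 / 2 := by linarith
    positivity
  have hval : ∀ u : Metric.sphere (0 : E3) 1, (⨍ v, kf p v ∂μ) u = -δ := by
    intro u
    have hu : ‖(u : E3)‖ = 1 := by simpa using u.2
    rw [average_eq, ContinuousMap.smul_apply, ContinuousMap.integral_apply hki]
    simp only [kf_apply]
    rw [integral_sub (hii _ hu) (hni.const_mul p), hi _ hu, integral_const_mul, hn, hδ, smul_eq_mul]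
    ring
  obtain ⟨g, hg, hdist⟩ := Metric.mem_closure_iff.1 hmem (δ / 2) (by positivity)
  obtain ⟨ι, _, w, z, hw0, hw1, hz, hsum⟩ := mem_convexHull_iff_exists_fintype.1 hg
  choose v hv using hz
  let e := Fintype.equivFin ι
  have hnorm : ∀ i, ‖w i • v i‖ = w i * ‖v i‖ := fun i => by
    rw [norm_smul, Real.norm_of_nonneg (hw0 i)]
  refine ⟨Fintype.card ι, fun j => w (e.symm j) • v (e.symm j),
    p * ∑ i, w i * ‖v i‖ - δ / 2, ?_, ?_⟩
  · intro u hu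
    rw [e.symm.sum_comp (fun i => |inner ℝ u (w i • v i)|)]
    let u' : Metric.sphere (0 : E3) 1 := ⟨u, by simpa using hu⟩
    have h1 := (ContinuousMap.dist_apply_le_dist (f := ⨍ v, kf p v ∂μ) (g := g) u').trans_lt hdist
    rw [hval, Real.dist_eq, abs_lt] at h1
    have h2 : g u' = ∑ i, |inner ℝ u (w i • v i)| - p * ∑ i, w i * ‖v i‖ := by
      rw [← hsum, ContinuousMap.sum_apply, Finset.mul_sum, ← Finset.sum_sub_distrib]
      refine Finset.sum_congr rfl fun i _ => ?_
      rw [ContinuousMap.smul_apply, ← hv, kf_apply, inner_smul_right, abs_mul,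
        abs_of_nonneg (hw0 i), smul_eq_mul]
      ring
    linarith [h1.1]
  · rw [e.symm.sum_comp (fun i => ‖w i • v i‖)]
    simp only [hnorm]
    linarith

/-- for `1/2 < p ≤ 1`, there is a finite family of rank-one projections
`P_y` on `ℂ²` whose noisy two-outcome POVMs
`E_{1|y} = p P_y + ((1-p)/2) 1`, `E_{2|y} = p (1 - P_y) + ((1-p)/2) 1`
are not jointly measurable. -/
theorem noisy_projective_incompatible_exists
    (p : ℝ) (hp0 : 1 / 2 < p) (hp1 : p ≤ 1) :
    ∃ (nY : ℕ) (P : Fin nY → Matrix (Fin 2) (Fin 2) ℂ),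
      (∀ y, (P y)ᴴ = P y ∧ P y * P y = P y ∧ (P y).trace = 1) ∧
      ¬ JointlyMeasurable (fun (b : Fin 2) (y : Fin nY) =>
        if b = 0 then p • P y + ((1 - p) / 2) • (1 : Matrix (Fin 2) (Fin 2) ℂ)
        else p • ((1 : Matrix (Fin 2) (Fin 2) ℂ) - P y)
          + ((1 - p) / 2) • (1 : Matrix (Fin 2) (Fin 2) ℂ)) := by
  obtain ⟨N, v, B, h1, h2⟩ := exists_family p hp0
  exact key p N v B h1 h2
end

section
/- Compatibility non-decreasing operations preserve joint measurability: let {E_{b|y}} be a jointly measurable family of POVMs on ℂ^d (settings y ∈ Y, outcomes b ∈ B, finite sets), and let a CNDO from (d, Y, B) to (d', Y', B') be given. Then the output family F_{b'|y'} = ∑_{a,k,y,b} p(y|y',a) q(b'|b,a,y',y) • K_{a,k}ᴴ * E_{b|y} * K_{a,k} is a jointly measurable family of POVMs on ℂ^{d'}. -/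
open scoped BigOperators Matrix ComplexOrder Kronecker ComplexConjugate

theorem jm_of_fintype {d : ℕ} {B Y L : Type} [Fintype B] [Fintype Y] [Fintype L]
    (E : B → Y → Matrix (Fin d) (Fin d) ℂ)
    (G : L → Matrix (Fin d) (Fin d) ℂ) (p : B → Y → L → ℝ)
    (hG : IsPOVM G) (h0 : ∀ b y l, 0 ≤ p b y l) (h1 : ∀ y l, ∑ b, p b y l = 1)
    (hE : ∀ b y, E b y = ∑ l, p b y l • G l) : JointlyMeasurable E := by
  let e := (Fintype.equivFin L).symm
  refine ⟨Fintype.card L, fun i => G (e i), fun b y i => p b y (e i), ⟨fun i => hG.1 _, ?_⟩,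
    fun b y l => h0 _ _ _, fun y l => h1 _ _, fun b y => ?_⟩
  · rw [← hG.2]
    exact Equiv.sum_comp e G
  · rw [hE]
    exact (Equiv.sum_comp e (fun l => p b y l • G l)).symm

theorem povm_of_jm {d : ℕ} {B Y : Type} [Fintype B] [Fintype Y]
    (E : B → Y → Matrix (Fin d) (Fin d) ℂ) (h : JointlyMeasurable E) (y : Y) :
    IsPOVM fun b => E b y := by
  obtain ⟨n, G, p, hG, h0, h1, hE⟩ := h
  refine ⟨fun b => ?_, ?_⟩
  · simp only [hE]
    exact Matrix.posSemidef_sum _ fun l _ => (hG.1 l).smul (h0 b y l)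
  · simp only [hE]
    rw [Finset.sum_comm]
    simp only [← Finset.sum_smul, h1, one_smul]
    exact hG.2

/-- compatibility non-decreasing operations preserve joint measurability.
The CNDO is given by Kraus operators `K a k : Matrix (Fin d) (Fin d') ℂ` with
`∑ KᴴK = 1`, and classical processings `p y y' a` and `q b' b a y' y`. -/
theorem cndo_preserves_joint_measurability
    {d d' : ℕ} {B Y B' Y' A κ : Type}
    [Fintype B] [Fintype Y] [Fintype B'] [Fintype Y'] [Fintype A] [Fintype κ]
    (K : A → κ → Matrix (Fin d) (Fin d') ℂ)
    (hK : ∑ a, ∑ k, (K a k)ᴴ * K a k = 1)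
    (p : Y → Y' → A → ℝ)
    (hp0 : ∀ y y' a, 0 ≤ p y y' a) (hp1 : ∀ y' a, ∑ y, p y y' a = 1)
    (q : B' → B → A → Y' → Y → ℝ)
    (hq0 : ∀ b' b a y' y, 0 ≤ q b' b a y' y)
    (hq1 : ∀ b a y' y, ∑ b', q b' b a y' y = 1)
    (E : B → Y → Matrix (Fin d) (Fin d) ℂ)
    (hE : ∀ y, IsPOVM fun b => E b y)
    (hJM : JointlyMeasurable E) :
    (∀ y', IsPOVM fun b' =>
      ∑ a, ∑ k, ∑ y, ∑ b, (p y y' a * q b' b a y' y) • ((K a k)ᴴ * E b y * K a k)) ∧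
    JointlyMeasurable (fun b' y' =>
      ∑ a, ∑ k, ∑ y, ∑ b, (p y y' a * q b' b a y' y) • ((K a k)ᴴ * E b y * K a k)) := by
  have key : JointlyMeasurable (fun b' y' =>
      ∑ a, ∑ k, ∑ y, ∑ b, (p y y' a * q b' b a y' y) • ((K a k)ᴴ * E b y * K a k)) := by
    obtain ⟨n, G, r, hG, h0, h1, hr⟩ := hJM
    refine jm_of_fintype (L := A × κ × Fin n) _
      (fun x => (K x.1 x.2.1)ᴴ * G x.2.2 * K x.1 x.2.1)
      (fun b' y' x => ∑ y, ∑ b, p y y' x.1 * q b' b x.1 y' y * r b y x.2.2)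
      ⟨fun x => (hG.1 _).conjTranspose_mul_mul_same _, ?_⟩ ?_ ?_ ?_
    · simp only [Fintype.sum_prod_type, ← Matrix.sum_mul, ← Matrix.mul_sum]
      rw [hG.2]
      simpa using hK
    · intro b' y' x
      exact Finset.sum_nonneg fun y _ => Finset.sum_nonneg fun b _ =>
        mul_nonneg (mul_nonneg (hp0 _ _ _) (hq0 _ _ _ _ _)) (h0 _ _ _)
    · intro y' x
      rw [Finset.sum_comm]
      rw [← hp1 y' x.1]
      refine Finset.sum_congr rfl fun y _ => ?_
      rw [Finset.sum_comm]
      simp only [← Finset.sum_mul, ← Finset.mul_sum, hq1, mul_one, h1]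
    · intro b' y'
      simp only [Fintype.sum_prod_type]
      refine Finset.sum_congr rfl fun a _ => Finset.sum_congr rfl fun k _ => ?_
      simp only [hr, Matrix.mul_sum, Matrix.sum_mul, Finset.smul_sum, Finset.sum_smul,
        Matrix.mul_smul, Matrix.smul_mul, smul_smul]
      rw [Finset.sum_comm (s := (Finset.univ : Finset (Fin n)))]
      exact Finset.sum_congr rfl fun y _ => Finset.sum_comm
  exact ⟨fun y' => povm_of_jm _ key y', key⟩
end

section
/- Jointly measurable families of POVMs are free under CNDO: for every family of POVMs {E_{b|y}} on ℂ^d (settings Y, outcomes B, all finite and nonempty) and every jointly measurable family of POVMs {F_{b'|y'}} on ℂ^{d'} (settings Y', outcomes B'), there exists a compatibility non-decreasing operation from (d, Y, B) to (d', Y', B') whose output on input {E_{b|y}} equals {F_{b'|y'}}. -/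
open scoped BigOperators Matrix ComplexOrder Kronecker ComplexConjugate

/-- jointly measurable families are free under CNDO: any jointly measurable
family of POVMs `F` on `ℂ^{d'}` can be obtained from any family of POVMs `E` on `ℂ^d`
by some compatibility non-decreasing operation. -/
theorem jointly_measurable_free_under_cndo
    {d d' : ℕ} {B Y B' Y' : Type}
    [Fintype B] [Fintype Y] [Nonempty B] [Nonempty Y]
    [Fintype B'] [Fintype Y'] (hd : 0 < d)
    (E : B → Y → Matrix (Fin d) (Fin d) ℂ)
    (hE : ∀ y, IsPOVM fun b => E b y)
    (F : B' → Y' → Matrix (Fin d') (Fin d') ℂ)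
    (hF : ∀ y', IsPOVM fun b' => F b' y')
    (hJM : JointlyMeasurable F) :
    ∃ (nA nk : ℕ) (K : Fin nA → Fin nk → Matrix (Fin d) (Fin d') ℂ)
      (p : Y → Y' → Fin nA → ℝ) (q : B' → B → Fin nA → Y' → Y → ℝ),
      (∑ a, ∑ k, (K a k)ᴴ * K a k = 1) ∧
      (∀ y y' a, 0 ≤ p y y' a) ∧ (∀ y' a, ∑ y, p y y' a = 1) ∧
      (∀ b' b a y' y, 0 ≤ q b' b a y' y) ∧ (∀ b a y' y, ∑ b', q b' b a y' y = 1) ∧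
      (∀ b' y', F b' y'
        = ∑ a, ∑ k, ∑ y, ∑ b, (p y y' a * q b' b a y' y) • ((K a k)ᴴ * E b y * K a k)) := by
  classical
  obtain ⟨n, G, r, hG, hr0, hr1, hFr⟩ := hJM
  have hM : ∀ a, ∃ M : Matrix (Fin d') (Fin d') ℂ, G a = Mᴴ * M := by
    intro a
    open scoped MatrixOrder in
    exact CStarAlgebra.nonneg_iff_eq_star_mul_self.mp (hG.1 a).nonneg
  choose M hM using hM
  let K : Fin n → Fin d' → Matrix (Fin d) (Fin d') ℂ := fun a k =>
    Matrix.of fun i j => if i = ⟨0, hd⟩ then M a k j else 0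
  have hK : ∀ a, ∑ k, (K a k)ᴴ * K a k = G a := by
    intro a
    rw [hM a]
    ext i j
    simp [K, Matrix.sum_apply, Matrix.mul_apply, Matrix.conjTranspose_apply]
  obtain ⟨y0⟩ := (inferInstance : Nonempty Y)
  refine ⟨n, d', K, fun y _ _ => if y = y0 then 1 else 0,
    fun b' _ a y' _ => r b' y' a, ?_, ?_, ?_, ?_, ?_, ?_⟩
  · simp_rw [hK]
    exact hG.2
  · intro y y' a
    dsimp only
    split_ifs <;> norm_num
  · intro y' a
    simp
  · intro b' b a y' y
    exact hr0 _ _ _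
  · intro b a y' y
    exact hr1 _ _
  · intro b' y'
    rw [hFr]
    refine Finset.sum_congr rfl fun a _ => ?_
    rw [← hK a, Finset.smul_sum]
    refine Finset.sum_congr rfl fun k _ => ?_
    rw [Finset.sum_eq_single y0]
    · simp only [if_true, one_mul]
      rw [← Finset.smul_sum, ← Matrix.sum_mul, ← Matrix.mul_sum, (hE y0).2, Matrix.mul_one]
    · intro y _ hy
      simp [hy]
    · simp
end

section
/- The incompatible weight is an incompatibility monotone: if a family of POVMs {F_{b'|y'}} on ℂ^{d'} is the output of some compatibility non-decreasing operation applied to a family of POVMs {E_{b|y}} on ℂ^d, then IW({F_{b'|y'}}) ≤ IW({E_{b|y}}). -/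
open scoped BigOperators Matrix ComplexOrder Kronecker ComplexConjugate

/-- The incompatible weight of a family of POVMs: the least `ν ∈ [0,1]` such that
`E = ν F + (1-ν) G` for some family of POVMs `F` and jointly measurable family of
POVMs `G`. -/
noncomputable def incompatibleWeight {d : ℕ} {B Y : Type} [Fintype B] [Fintype Y]
    (E : B → Y → Matrix (Fin d) (Fin d) ℂ) : ℝ :=
  sInf {ν : ℝ | 0 ≤ ν ∧ ν ≤ 1 ∧
    ∃ F G : B → Y → Matrix (Fin d) (Fin d) ℂ,
      (∀ y, IsPOVM fun b => F b y) ∧ (∀ y, IsPOVM fun b => G b y) ∧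
      JointlyMeasurable G ∧
      (∀ b y, E b y = ν • F b y + (1 - ν) • G b y)}

/-- The action of a CNDO on a family of matrices. -/
noncomputable def cndoMap {d d' : ℕ} {B Y B' Y' A κ : Type}
    [Fintype B] [Fintype Y] [Fintype A] [Fintype κ]
    (K : A → κ → Matrix (Fin d) (Fin d') ℂ) (p : Y → Y' → A → ℝ)
    (q : B' → B → A → Y' → Y → ℝ)
    (E : B → Y → Matrix (Fin d) (Fin d) ℂ) : B' → Y' → Matrix (Fin d') (Fin d') ℂ :=
  fun b' y' => ∑ a, ∑ k, ∑ y, ∑ b, (p y y' a * q b' b a y' y) • ((K a k)ᴴ * E b y * K a k)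

theorem posSemidef_real_smul {d : ℕ} {M : Matrix (Fin d) (Fin d) ℂ} (hM : M.PosSemidef)
    {c : ℝ} (hc : 0 ≤ c) : (c • M).PosSemidef := by
  have h : ((c : ℂ) • M).PosSemidef := hM.smul (by exact_mod_cast hc)
  have e : c • M = (c : ℂ) • M := by
    ext i j
    simp
  rw [e]
  exact h

theorem posSemidef_fsum {d : ℕ} {ι : Type} [Fintype ι] (M : ι → Matrix (Fin d) (Fin d) ℂ)
    (hM : ∀ i, (M i).PosSemidef) : (∑ i, M i).PosSemidef :=
  Matrix.posSemidef_sum _ fun i _ => hM i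

theorem cndoMap_isPOVM {d d' : ℕ} {B Y B' Y' A κ : Type}
    [Fintype B] [Fintype Y] [Fintype B'] [Fintype A] [Fintype κ]
    (K : A → κ → Matrix (Fin d) (Fin d') ℂ)
    (hK : ∑ a, ∑ k, (K a k)ᴴ * K a k = 1)
    (p : Y → Y' → A → ℝ)
    (hp0 : ∀ y y' a, 0 ≤ p y y' a) (hp1 : ∀ y' a, ∑ y, p y y' a = 1)
    (q : B' → B → A → Y' → Y → ℝ)
    (hq0 : ∀ b' b a y' y, 0 ≤ q b' b a y' y)
    (hq1 : ∀ b a y' y, ∑ b', q b' b a y' y = 1)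
    (E : B → Y → Matrix (Fin d) (Fin d) ℂ)
    (hE : ∀ y, IsPOVM fun b => E b y) (y' : Y') :
    IsPOVM fun b' => cndoMap K p q E b' y' := by
  constructor
  · intro b'
    refine posSemidef_fsum _ fun a => posSemidef_fsum _ fun k => posSemidef_fsum _ fun y =>
      posSemidef_fsum _ fun b => posSemidef_real_smul ?_ (mul_nonneg (hp0 _ _ _) (hq0 _ _ _ _ _))
    exact ((hE y).1 b).conjTranspose_mul_mul_same _
  · unfold cndoMap
    rw [Finset.sum_comm, ← hK]
    refine Finset.sum_congr rfl fun a _ => ?_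
    rw [Finset.sum_comm]
    refine Finset.sum_congr rfl fun k _ => ?_
    rw [Finset.sum_comm]
    have h : ∀ y, ∑ b', ∑ b, (p y y' a * q b' b a y' y) • ((K a k)ᴴ * E b y * K a k)
        = p y y' a • ((K a k)ᴴ * K a k) := by
      intro y
      rw [Finset.sum_comm]
      simp_rw [← Finset.sum_smul, ← Finset.mul_sum, hq1, mul_one]
      rw [← Finset.smul_sum, ← Matrix.sum_mul, ← Matrix.mul_sum, (hE y).2, Matrix.mul_one]
    simp_rw [h]
    rw [← Finset.sum_smul, hp1, one_smul]

theorem jointlyMeasurable_of_fintype {d : ℕ} {B Y L : Type} [Fintype B] [Fintype Y] [Fintype L]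
    (E : B → Y → Matrix (Fin d) (Fin d) ℂ) (G : L → Matrix (Fin d) (Fin d) ℂ)
    (r : B → Y → L → ℝ) (hG : IsPOVM G) (h0 : ∀ b y l, 0 ≤ r b y l)
    (h1 : ∀ y l, ∑ b, r b y l = 1) (hE : ∀ b y, E b y = ∑ l, r b y l • G l) :
    JointlyMeasurable E := by
  let e := (Fintype.equivFin L).symm
  refine ⟨Fintype.card L, fun i => G (e i), fun b y i => r b y (e i), ⟨fun i => hG.1 _, ?_⟩,
    fun _ _ _ => h0 _ _ _, fun _ _ => h1 _ _, fun b y => ?_⟩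
  · rw [Equiv.sum_comp e G]; exact hG.2
  · rw [hE, Equiv.sum_comp e (fun l => r b y l • G l)]

theorem cndoMap_jointlyMeasurable {d d' : ℕ} {B Y B' Y' A κ : Type}
    [Fintype B] [Fintype Y] [Fintype B'] [Fintype Y'] [Fintype A] [Fintype κ]
    (K : A → κ → Matrix (Fin d) (Fin d') ℂ)
    (hK : ∑ a, ∑ k, (K a k)ᴴ * K a k = 1)
    (p : Y → Y' → A → ℝ)
    (hp0 : ∀ y y' a, 0 ≤ p y y' a) (hp1 : ∀ y' a, ∑ y, p y y' a = 1)
    (q : B' → B → A → Y' → Y → ℝ)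
    (hq0 : ∀ b' b a y' y, 0 ≤ q b' b a y' y)
    (hq1 : ∀ b a y' y, ∑ b', q b' b a y' y = 1)
    (E : B → Y → Matrix (Fin d) (Fin d) ℂ)
    (hE : JointlyMeasurable E) : JointlyMeasurable (cndoMap K p q E) := by
  obtain ⟨n, G, r, hG, hr0, hr1, hEG⟩ := hE
  refine jointlyMeasurable_of_fintype (L := A × Fin n) _
    (fun x => ∑ k, (K x.1 k)ᴴ * G x.2 * K x.1 k)
    (fun b' y' x => ∑ y, ∑ b, p y y' x.1 * q b' b x.1 y' y * r b y x.2) ⟨?_, ?_⟩ ?_ ?_ ?_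
  · exact fun x => posSemidef_fsum _ fun k => (hG.1 x.2).conjTranspose_mul_mul_same _
  · rw [Fintype.sum_prod_type, ← hK]
    refine Finset.sum_congr rfl fun a _ => ?_
    rw [Finset.sum_comm]
    refine Finset.sum_congr rfl fun k _ => ?_
    simp only
    rw [← Matrix.sum_mul, ← Matrix.mul_sum, hG.2, Matrix.mul_one]
  · exact fun b' y' x => Finset.sum_nonneg fun y _ => Finset.sum_nonneg fun b _ =>
      mul_nonneg (mul_nonneg (hp0 _ _ _) (hq0 _ _ _ _ _)) (hr0 _ _ _)
  · intro y' x
    rw [Finset.sum_comm, ← hp1 y' x.1]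
    refine Finset.sum_congr rfl fun y _ => ?_
    rw [Finset.sum_comm]
    simp_rw [← Finset.sum_mul, ← Finset.mul_sum, hq1, mul_one]
    rw [← Finset.mul_sum, hr1, mul_one]
  · intro b' y'
    rw [Fintype.sum_prod_type]
    unfold cndoMap
    refine Finset.sum_congr rfl fun a _ => ?_
    simp only [Finset.smul_sum, Finset.sum_smul]
    rw [Finset.sum_comm (s := (Finset.univ : Finset (Fin n)))]
    refine Finset.sum_congr rfl fun k _ => ?_
    rw [Finset.sum_comm (s := (Finset.univ : Finset (Fin n)))]
    refine Finset.sum_congr rfl fun y _ => ?_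
    rw [Finset.sum_comm (s := (Finset.univ : Finset (Fin n)))]
    refine Finset.sum_congr rfl fun b _ => ?_
    rw [hEG, Matrix.mul_sum, Matrix.sum_mul, Finset.smul_sum]
    refine Finset.sum_congr rfl fun l _ => ?_
    rw [Matrix.mul_smul, Matrix.smul_mul, smul_smul]

theorem cndoMap_combo {d d' : ℕ} {B Y B' Y' A κ : Type}
    [Fintype B] [Fintype Y] [Fintype A] [Fintype κ]
    (K : A → κ → Matrix (Fin d) (Fin d') ℂ) (p : Y → Y' → A → ℝ)
    (q : B' → B → A → Y' → Y → ℝ)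
    (E F G : B → Y → Matrix (Fin d) (Fin d) ℂ) (s t : ℝ)
    (h : ∀ b y, E b y = s • F b y + t • G b y) (b' : B') (y' : Y') :
    cndoMap K p q E b' y' = s • cndoMap K p q F b' y' + t • cndoMap K p q G b' y' := by
  unfold cndoMap
  simp only [Finset.smul_sum, ← Finset.sum_add_distrib]
  refine Finset.sum_congr rfl fun a _ => Finset.sum_congr rfl fun k _ =>
    Finset.sum_congr rfl fun y _ => Finset.sum_congr rfl fun b _ => ?_
  rw [h, Matrix.mul_add, Matrix.add_mul, Matrix.mul_smul, Matrix.smul_mul, Matrix.mul_smul,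
    Matrix.smul_mul, smul_add, smul_comm s, smul_comm t]

/-- Whenever a family of POVMs exists, a jointly measurable one exists. -/
theorem exists_jointlyMeasurable {d : ℕ} {B Y : Type} [Fintype B] [Fintype Y]
    (E : B → Y → Matrix (Fin d) (Fin d) ℂ) (hE : ∀ y, IsPOVM fun b => E b y) :
    ∃ G : B → Y → Matrix (Fin d) (Fin d) ℂ,
      (∀ y, IsPOVM fun b => G b y) ∧ JointlyMeasurable G := by
  classical
  rcases isEmpty_or_nonempty Y with hY | ⟨⟨y0⟩⟩
  · refine ⟨E, hE, 1, fun _ => 1, fun _ _ _ => 1, ⟨fun _ => Matrix.PosSemidef.one, by simp⟩,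
      fun _ _ _ => zero_le_one, fun y => hY.elim y, fun _ y => hY.elim y⟩
  rcases isEmpty_or_nonempty B with hB | ⟨⟨b0⟩⟩
  · refine ⟨E, hE, 0, fun _ => 1, fun _ _ _ => 1, ⟨fun _ => Matrix.PosSemidef.one, ?_⟩,
      fun _ _ _ => zero_le_one, fun _ l => l.elim0, fun b => hB.elim b⟩
    have := (hE y0).2
    simpa using this
  · refine ⟨fun b _ => if b = b0 then 1 else 0, fun y => ⟨fun b => ?_, by simp⟩,
      1, fun _ => 1, fun b _ _ => if b = b0 then 1 else 0,
      ⟨fun _ => Matrix.PosSemidef.one, by simp⟩, fun b _ _ => ?_, by simp, fun b y => ?_⟩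
    · dsimp only
      split_ifs
      · exact Matrix.PosSemidef.one
      · exact Matrix.PosSemidef.zero
    · dsimp only
      split_ifs <;> norm_num
    · by_cases h : b = b0 <;> simp [h]

/-- the incompatible weight is an incompatibility monotone: it does not
increase under compatibility non-decreasing operations. -/
theorem incompatibleWeight_monotone_under_cndo
    {d d' : ℕ} {B Y B' Y' A κ : Type}
    [Fintype B] [Fintype Y] [Fintype B'] [Fintype Y'] [Fintype A] [Fintype κ]
    (K : A → κ → Matrix (Fin d) (Fin d') ℂ)
    (hK : ∑ a, ∑ k, (K a k)ᴴ * K a k = 1)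
    (p : Y → Y' → A → ℝ)
    (hp0 : ∀ y y' a, 0 ≤ p y y' a) (hp1 : ∀ y' a, ∑ y, p y y' a = 1)
    (q : B' → B → A → Y' → Y → ℝ)
    (hq0 : ∀ b' b a y' y, 0 ≤ q b' b a y' y)
    (hq1 : ∀ b a y' y, ∑ b', q b' b a y' y = 1)
    (E : B → Y → Matrix (Fin d) (Fin d) ℂ)
    (hE : ∀ y, IsPOVM fun b => E b y)
    (F : B' → Y' → Matrix (Fin d') (Fin d') ℂ)
    (hF : ∀ b' y', F b' y'
      = ∑ a, ∑ k, ∑ y, ∑ b, (p y y' a * q b' b a y' y) • ((K a k)ᴴ * E b y * K a k)) :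
    incompatibleWeight F ≤ incompatibleWeight E := by
  obtain ⟨G0, hG0, hJ0⟩ := exists_jointlyMeasurable E hE
  have hFE : F = cndoMap K p q E := by
    funext b' y'
    exact hF b' y'
  unfold incompatibleWeight
  refine csInf_le_csInf ⟨0, fun ν h => h.1⟩
    ⟨1, zero_le_one, le_refl 1, E, G0, hE, hG0, hJ0, by simp⟩ ?_
  rintro ν ⟨h0, h1, F1, G1, hF1, hG1, hJ, h⟩
  refine ⟨h0, h1, cndoMap K p q F1, cndoMap K p q G1,
    cndoMap_isPOVM K hK p hp0 hp1 q hq0 hq1 F1 hF1,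
    cndoMap_isPOVM K hK p hp0 hp1 q hq0 hq1 G1 hG1,
    cndoMap_jointlyMeasurable K hK p hp0 hp1 q hq0 hq1 G1 hJ, ?_⟩
  rw [hFE]
  exact cndoMap_combo K p q E F1 G1 ν (1 - ν) h
end
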